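/- arXiv:2001.08825 — 4 statements merged into one kernel-verified Lean document; each statement's English description precedes it below -/
import Mathlib

section
/- Let α ∈ (0,2), n ∈ ℤ with n ≠ 0, and x ∈ ℝ. Then the function y ↦ (λ_n'(x−y) − λ_n'(x+y))·y^(−α) is absolutely integrable on (0,∞), and (c_α/α)·∫₀^∞ (λ_n'(x−y) − λ_n'(x+y))·y^(−α) dy = −(2·Γ(1+α)/(i·sgn(n)·x + 1)^(1+α)) · ∑_{k=0}^{|n|−1} C(|n|, k+1)·C(−1−α, k)·(2/(i·sgn(n)·x + 1))^k. (The right-hand side is the terminating hypergeometric expression −(2|n|Γ(1+α)/(i·sgn(n)x+1)^(1+α))·₂F₁(1−|n|, 1+α; 2; 2/(i·sgn(n)x+1)).) -/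
open MeasureTheory Finset

/-- The constant `c_α = α·2^(α−1)·Γ(1/2+α/2)/(√π·Γ(1−α/2))`. -/
noncomputable def cFrac (α : ℝ) : ℝ :=
  α * 2 ^ (α - 1) * Real.Gamma (1 / 2 + α / 2) / (Real.sqrt Real.pi * Real.Gamma (1 - α / 2))

/-- The complex Higgins function `λ_n(x) = ((ix−1)/(ix+1))^n`. -/
noncomputable def higgins (n : ℤ) (x : ℝ) : ℂ :=
  ((Complex.I * (x : ℂ) - 1) / (Complex.I * (x : ℂ) + 1)) ^ n

/-- The derivative `λ_n'`. -/
noncomputable def higgins' (n : ℤ) (x : ℝ) : ℂ := deriv (higgins n) x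

/-- The complex Christov function `μ_n(x) = (ix−1)^n/(ix+1)^(n+1)`. -/
noncomputable def christov (n : ℤ) (x : ℝ) : ℂ :=
  (Complex.I * (x : ℂ) - 1) ^ n / (Complex.I * (x : ℂ) + 1) ^ (n + 1)

/-- The derivative `μ_n'`. -/
noncomputable def christov' (n : ℤ) (x : ℝ) : ℂ := deriv (christov n) x

/-- Generalized binomial coefficient `C(z,k) = z(z−1)⋯(z−k+1)/k!` over `ℂ`. -/
noncomputable def gbinom (z : ℂ) (k : ℕ) : ℂ :=
  (∏ i ∈ Finset.range k, (z - (i : ℂ))) / (k.factorial : ℂ)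

/-- Generalized binomial coefficient `C(z,k) = z(z−1)⋯(z−k+1)/k!` over `ℝ`. -/
noncomputable def gbinomR (z : ℝ) (k : ℕ) : ℝ :=
  (∏ i ∈ Finset.range k, (z - (i : ℝ))) / (k.factorial : ℝ)

/-- Rising factorial (Pochhammer symbol) `(z)_k = z(z+1)⋯(z+k−1)` over `ℂ`. -/
noncomputable def poch (z : ℂ) (k : ℕ) : ℂ := ∏ i ∈ Finset.range k, (z + (i : ℂ))

/-- `G_α(l) = (1/(l+1))·∑_{k=0}^{l} C(l+1,k+1)·C(−1−α,k)·2^k = ₂F₁(−l, 1+α; 2; 2)`, over `ℂ`. -/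
noncomputable def Gc (α : ℝ) (l : ℕ) : ℂ :=
  (1 / ((l : ℂ) + 1)) * ∑ k ∈ Finset.range (l + 1),
    gbinom ((l : ℂ) + 1) (k + 1) * gbinom (-1 - (α : ℂ)) k * 2 ^ k

/-- `G_α(l) = (1/(l+1))·∑_{k=0}^{l} C(l+1,k+1)·C(−1−α,k)·2^k = ₂F₁(−l, 1+α; 2; 2)`, over `ℝ`. -/
noncomputable def GR (α : ℝ) (l : ℕ) : ℝ :=
  (1 / ((l : ℝ) + 1)) * ∑ k ∈ Finset.range (l + 1),
    gbinomR ((l : ℝ) + 1) (k + 1) * gbinomR (-1 - α) k * 2 ^ k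

/-- `H_α(l) = ∑_{k=0}^{l} C(l,k)·C(−1−α,k)·2^k = ₂F₁(−l, 1+α; 1; 2)`, over `ℂ`. -/
noncomputable def Hc (α : ℝ) (l : ℕ) : ℂ :=
  ∑ k ∈ Finset.range (l + 1), gbinom (l : ℂ) k * gbinom (-1 - (α : ℂ)) k * 2 ^ k

/-- `H_α(l) = ∑_{k=0}^{l} C(l,k)·C(−1−α,k)·2^k = ₂F₁(−l, 1+α; 1; 2)`, over `ℝ`. -/
noncomputable def HR (α : ℝ) (l : ℕ) : ℝ :=
  ∑ k ∈ Finset.range (l + 1), gbinomR (l : ℝ) k * gbinomR (-1 - α) k * 2 ^ k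

/-- `arccot(x) = π/2 − arctan(x) ∈ (0,π)`. -/
noncomputable def arccot (x : ℝ) : ℝ := Real.pi / 2 - Real.arctan x


lemma int_rpow_exp {a r : ℝ} (ha : 0 < a) (hr : 0 < r) :
    IntegrableOn (fun t : ℝ => t ^ (a - 1) * Real.exp (-(r * t))) (Set.Ioi 0) := by
  have := integrableOn_rpow_mul_exp_neg_mul_rpow (p := 1) (s := a - 1) (b := r)
    (by linarith) one_pos hr
  simpa using this

lemma aesm_kernel (a : ℝ) (w : ℂ) : AEStronglyMeasurable
    (fun t : ℝ => ((t ^ a : ℝ) : ℂ) * Complex.exp (-(w * t))) (volume.restrict (Set.Ioi 0)) := by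
  apply Measurable.aestronglyMeasurable
  fun_prop

lemma norm_kernel (a : ℝ) (w : ℂ) {t : ℝ} (ht : 0 < t) :
    ‖((t ^ a : ℝ) : ℂ) * Complex.exp (-(w * t))‖ = t ^ a * Real.exp (-(w.re * t)) := by
  rw [norm_mul, Complex.norm_exp, Complex.norm_real, Real.norm_of_nonneg (by positivity)]
  simp

lemma int_kernel {a : ℝ} {w : ℂ} (ha : 0 < a) (hw : 0 < w.re) : IntegrableOn
    (fun t : ℝ => ((t ^ (a - 1) : ℝ) : ℂ) * Complex.exp (-(w * t))) (Set.Ioi 0) := by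
  rw [IntegrableOn, ← integrable_norm_iff (aesm_kernel _ _)]
  refine (integrableOn_congr_fun (fun t ht => ?_) measurableSet_Ioi).mpr (int_rpow_exp ha hw)
  exact norm_kernel _ _ ht

lemma laplace_diff {a : ℝ} (ha : 0 < a) : DifferentiableOn ℂ
    (fun w : ℂ => ∫ t in Set.Ioi (0:ℝ), ((t ^ (a - 1) : ℝ) : ℂ) * Complex.exp (-(w * t)))
    {w : ℂ | 0 < w.re} := by
  intro w hw
  change 0 < w.re at hw
  apply DifferentiableAt.differentiableWithinAt
  have hs : {z : ℂ | w.re / 2 < z.re} ∈ nhds w :=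
    (isOpen_lt continuous_const Complex.continuous_re).mem_nhds (by simp; linarith)
  refine (hasDerivAt_integral_of_dominated_loc_of_deriv_le
    (μ := volume.restrict (Set.Ioi (0:ℝ))) (𝕜 := ℂ)
    (F := fun (z : ℂ) (t : ℝ) => ((t ^ (a - 1) : ℝ) : ℂ) * Complex.exp (-(z * t)))
    (F' := fun (z : ℂ) (t : ℝ) => -(((t ^ ((a + 1) - 1) : ℝ) : ℂ) * Complex.exp (-(z * t))))
    (bound := fun t : ℝ => t ^ ((a + 1) - 1) * Real.exp (-(w.re / 2 * t)))
    hs ?_ ?_ ?_ ?_ ?_ ?_).2.differentiableAt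
  · exact Filter.Eventually.of_forall fun z => aesm_kernel _ _
  · exact int_kernel ha hw
  · exact (aesm_kernel _ _).neg
  · filter_upwards [ae_restrict_mem measurableSet_Ioi] with t ht z hz
    simp only [Set.mem_Ioi] at ht
    change w.re / 2 < z.re at hz
    rw [norm_neg, norm_kernel _ _ ht]
    gcongr
  · exact int_rpow_exp (by linarith) (by linarith)
  · filter_upwards [ae_restrict_mem measurableSet_Ioi] with t ht z hz
    simp only [Set.mem_Ioi] at ht
    have h1 : HasDerivAt (fun z : ℂ => Complex.exp (-(z * t))) (Complex.exp (-(z * t)) * (-(1 * t))) z :=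
      (((hasDerivAt_id z).mul_const (t : ℂ)).neg).cexp
    refine (h1.const_mul ((t ^ (a - 1) : ℝ) : ℂ)).congr_deriv ?_
    rw [show a + 1 - 1 = (a - 1) + 1 by ring, Real.rpow_add_one ht.ne']
    push_cast; ring

lemma laplace_eq {a : ℝ} {w : ℂ} (ha : 0 < a) (hw : 0 < w.re) :
    ∫ t in Set.Ioi (0:ℝ), ((t ^ (a - 1) : ℝ) : ℂ) * Complex.exp (-(w * t)) =
      (Real.Gamma a : ℂ) * w ^ (-(a : ℂ)) := by
  have hopen : IsOpen {w : ℂ | 0 < w.re} := isOpen_lt continuous_const Complex.continuous_re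
  have hconv : Convex ℝ {w : ℂ | 0 < w.re} := convex_halfSpace_re_gt 0
  have h2 : DifferentiableOn ℂ (fun w : ℂ => (Real.Gamma a : ℂ) * w ^ (-(a : ℂ)))
      {w : ℂ | 0 < w.re} := by
    intro z hz
    apply DifferentiableAt.differentiableWithinAt
    apply DifferentiableAt.const_mul
    exact DifferentiableAt.cpow_const differentiableAt_id (Or.inl hz)
  refine ((laplace_diff ha).analyticOnNhd hopen).eqOn_of_preconnected_of_frequently_eq
    (h2.analyticOnNhd hopen) hconv.isPreconnected (z₀ := 1) (by simp) ?_ hw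
  have key : ∀ r : ℝ, 0 < r → ∫ t in Set.Ioi (0:ℝ), ((t ^ (a - 1) : ℝ) : ℂ) * Complex.exp (-((r:ℂ) * t)) =
      (Real.Gamma a : ℂ) * (r:ℂ) ^ (-(a : ℂ)) := by
    intro r hr
    have h := Real.integral_rpow_mul_exp_neg_mul_Ioi ha hr
    have h' : ((∫ t : ℝ in Set.Ioi 0, t ^ (a - 1) * Real.exp (-(r * t)) : ℝ) : ℂ) =
      (((1 / r) ^ a * Real.Gamma a : ℝ) : ℂ) := by rw [h]
    rw [← integral_complex_ofReal] at h'
    push_cast at h' 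
    rw [h', mul_comm, ← Complex.ofReal_neg, ← Complex.ofReal_cpow hr.le, Real.rpow_neg hr.le, one_div, Real.inv_rpow hr.le]
  have htend : Filter.Tendsto (fun n : ℕ => ((1 + 1 / ((n:ℝ) + 1) : ℝ) : ℂ)) Filter.atTop (nhdsWithin 1 {1}ᶜ) := by
    apply tendsto_nhdsWithin_of_tendsto_nhds_of_eventually_within
    · have : Filter.Tendsto (fun n : ℕ => (1 + 1 / ((n:ℝ) + 1) : ℝ)) Filter.atTop (nhds (1 + 0)) :=
        tendsto_const_nhds.add tendsto_one_div_add_atTop_nhds_zero_nat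
      rw [add_zero] at this
      exact (Complex.continuous_ofReal.tendsto 1).comp this
    · refine Filter.Eventually.of_forall fun n => ?_
      simp only [Set.mem_compl_iff, Set.mem_singleton_iff]
      intro h
      have h3 : (1 + 1 / ((n:ℝ) + 1) : ℝ) = 1 := by exact_mod_cast h
      have : (0:ℝ) < 1 / ((n:ℝ) + 1) := by positivity
      linarith
  apply htend.frequently
  refine Filter.Frequently.of_forall fun n => ?_
  exact key _ (by positivity)

lemma Kint {α t : ℝ} (hα : α ∈ Set.Ioo (0 : ℝ) 2) (ht : 0 < t) :
    IntegrableOn (fun s : ℝ => s ^ (α - 1) * (t / (s ^ 2 + t ^ 2))) (Set.Ioi 0) ∧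
    ∫ s in Set.Ioi (0:ℝ), s ^ (α - 1) * (t / (s ^ 2 + t ^ 2)) =
      1 / 2 * Real.Gamma (α / 2) * Real.Gamma (1 - α / 2) * t ^ (α - 1) := by
  obtain ⟨h0, h2⟩ := hα
  set F : ℝ → ℝ → ℝ := fun s u => s ^ (α - 1) * (t * Real.exp (-((s ^ 2 + t ^ 2) * u))) with hF
  have hinner : ∀ s ∈ Set.Ioi (0:ℝ), ∫ u in Set.Ioi (0:ℝ), F s u = s ^ (α - 1) * (t / (s ^ 2 + t ^ 2)) := by
    intro s hs
    have hs' : 0 < s ^ 2 + t ^ 2 := by positivity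
    simp only [hF]
    rw [integral_const_mul, integral_const_mul]
    have := integral_exp_mul_Ioi (a := -(s ^ 2 + t ^ 2)) (by linarith) 0
    simp only [neg_mul, mul_zero, Real.exp_zero] at this
    rw [this]
    field_simp
  have hsplit : ∀ s u : ℝ, F s u = (t * Real.exp (-(t ^ 2 * u))) * (s ^ (α - 1) * Real.exp (-u * s ^ (2:ℝ))) := by
    intro s u
    simp only [hF]
    rw [show -((s ^ 2 + t ^ 2) * u) = -(t ^ 2 * u) + -u * s ^ (2:ℝ) by rw [Real.rpow_two]; ring, Real.exp_add]
    ring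
  have houter : ∀ u ∈ Set.Ioi (0:ℝ), ∫ s in Set.Ioi (0:ℝ), F s u =
      (1 / 2 * Real.Gamma (α / 2) * t) * (u ^ ((1 - α / 2) - 1) * Real.exp (-(t ^ 2 * u))) := by
    intro u hu
    simp only [hsplit]
    rw [integral_const_mul, integral_rpow_mul_exp_neg_mul_rpow two_pos (by linarith) hu]
    rw [show (α - 1 + 1) / 2 = α / 2 by ring, show -(α - 1 + 1) / 2 = 1 - α / 2 - 1 by ring]
    ring
  have hFnn : ∀ u, ∀ s ∈ Set.Ioi (0:ℝ), ‖F s u‖ = F s u := by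
    intro u s hs
    have : (0:ℝ) < s := hs
    exact Real.norm_of_nonneg (by positivity)
  have hint : Integrable (Function.uncurry F)
      ((volume.restrict (Set.Ioi (0:ℝ))).prod (volume.restrict (Set.Ioi (0:ℝ)))) := by
    rw [integrable_prod_iff']
    · constructor
      · filter_upwards [ae_restrict_mem measurableSet_Ioi] with u hu
        simp only [Function.uncurry, hsplit]
        exact (integrableOn_rpow_mul_exp_neg_mul_rpow (by linarith) two_pos hu).const_mul _
      · refine (integrableOn_congr_fun (g := fun u => (1 / 2 * Real.Gamma (α / 2) * t) *
          (u ^ ((1 - α / 2) - 1) * Real.exp (-(t ^ 2 * u)))) (fun u hu => ?_) measurableSet_Ioi).mpr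
          ((int_rpow_exp (by linarith) (by positivity)).const_mul _)
        simp only [Function.uncurry]
        rw [← houter u hu]
        exact setIntegral_congr_fun measurableSet_Ioi (hFnn u)
    · apply Measurable.aestronglyMeasurable
      simp only [hF, Function.uncurry_def]
      fun_prop
  constructor
  · refine (integrableOn_congr_fun (fun s hs => ?_) measurableSet_Ioi).mp hint.integral_prod_left
    exact hinner s hs
  · rw [← setIntegral_congr_fun measurableSet_Ioi hinner, integral_integral_swap hint,
      setIntegral_congr_fun measurableSet_Ioi houter, integral_const_mul,
      Real.integral_rpow_mul_exp_neg_mul_Ioi (by linarith) (by positivity)]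
    rw [one_div (t ^ 2), Real.inv_rpow (by positivity), ← Real.rpow_two, ← Real.rpow_mul ht.le,
      ← Real.rpow_neg ht.le, show -(2 * (1 - α / 2)) = (α - 1) - 1 by ring, Real.rpow_sub_one ht.ne']
    field_simp

/-- Laplace transform of sine. -/
lemma sin_laplace {s t : ℝ} (hs : 0 < s) : 
    ∫ y in Set.Ioi (0:ℝ), Complex.exp (-((s:ℂ) * y)) * Complex.sin (y * t) = ((t / (s ^ 2 + t ^ 2) : ℝ) : ℂ) := by
  have e : ∀ y : ℝ, Complex.exp (-((s:ℂ) * y)) * Complex.sin (y * t) =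
      (Complex.I / 2) * (Complex.exp ((-(s:ℂ) - t * Complex.I) * y) - Complex.exp ((-(s:ℂ) + t * Complex.I) * y)) := by
    intro y
    rw [Complex.sin, show (-(s:ℂ) - t * Complex.I) * y = -((s:ℂ) * y) + -(y * t) * Complex.I by ring,
      show (-(s:ℂ) + t * Complex.I) * y = -((s:ℂ) * y) + (y * t) * Complex.I by ring, Complex.exp_add, Complex.exp_add]
    ring
  simp only [e]
  have r1 : (-(s:ℂ) - t * Complex.I).re < 0 := by simp [hs]
  have r2 : (-(s:ℂ) + t * Complex.I).re < 0 := by simp [hs]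
  rw [integral_const_mul, integral_sub (integrableOn_exp_mul_complex_Ioi r1 0) (integrableOn_exp_mul_complex_Ioi r2 0),
    integral_exp_mul_complex_Ioi r1, integral_exp_mul_complex_Ioi r2]
  have n1 : (-(s:ℂ) - t * Complex.I) ≠ 0 := by intro h; rw [h] at r1; simp at r1
  have n2 : (-(s:ℂ) + t * Complex.I) ≠ 0 := by intro h; rw [h] at r2; simp at r2
  have n3 : ((s:ℂ) ^ 2 + t ^ 2) ≠ 0 := by
    have : s ^ 2 + t ^ 2 ≠ 0 := by positivity
    exact_mod_cast this
  push_cast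
  simp only [mul_zero, Complex.exp_zero]
  have hm : (-(s:ℂ) - t * Complex.I) * (-(s:ℂ) + t * Complex.I) = s ^ 2 + t ^ 2 := by
    ring_nf; rw [Complex.I_sq]; ring
  rw [← hm, div_sub_div _ _ n1 n2, mul_div_assoc', div_left_inj' (mul_ne_zero n1 n2)]
  ring_nf; rw [Complex.I_sq]; ring

noncomputable def phiK (a : ℝ) (w : ℂ) (t : ℝ) : ℂ := ((t ^ (a - 1) : ℝ) : ℂ) * Complex.exp (-(w * t))

noncomputable def gK (a : ℝ) (w : ℂ) (y : ℝ) : ℂ :=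
  ∫ t in Set.Ioi (0:ℝ), phiK a w t * Complex.sin (y * t)

@[fun_prop] lemma phiK_meas (a : ℝ) (w : ℂ) : Measurable (phiK a w) := by
  unfold phiK; fun_prop

lemma phiK_int {a : ℝ} {w : ℂ} (ha : 0 < a) (hw : 0 < w.re) : IntegrableOn (phiK a w) (Set.Ioi 0) :=
  int_kernel ha hw

lemma norm_sin_ofReal_le (r : ℝ) : ‖Complex.sin r‖ ≤ |r| := by
  rw [← Complex.ofReal_sin, Complex.norm_real, Real.norm_eq_abs]
  exact Real.abs_sin_le_abs

lemma norm_sin_ofReal_le_one (r : ℝ) : ‖Complex.sin r‖ ≤ 1 := by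
  rw [← Complex.ofReal_sin, Complex.norm_real, Real.norm_eq_abs]
  exact Real.abs_sin_le_one r

lemma gK_eq {a : ℝ} {w : ℂ} (ha : 0 < a) (hw : 0 < w.re) (y : ℝ) :
    gK a w y = (Real.Gamma a : ℂ) * (Complex.I / 2) *
      ((w + Complex.I * y) ^ (-(a : ℂ)) - (w - Complex.I * y) ^ (-(a : ℂ))) := by
  have e : ∀ t : ℝ, phiK a w t * Complex.sin (y * t) =
      (Complex.I / 2) * (phiK a (w + Complex.I * y) t - phiK a (w - Complex.I * y) t) := by
    intro t
    unfold phiK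
    rw [Complex.sin, show -((w + Complex.I * y) * t) = -(w * t) + -(y * t) * Complex.I by ring,
      show -((w - Complex.I * y) * t) = -(w * t) + (y * t) * Complex.I by ring, Complex.exp_add, Complex.exp_add]
    ring
  have r1 : 0 < (w + Complex.I * y).re := by simpa using hw
  have r2 : 0 < (w - Complex.I * y).re := by simpa using hw
  unfold gK
  simp only [e]
  rw [integral_const_mul, integral_sub (phiK_int ha r1) (phiK_int ha r2)]
  unfold phiK
  rw [laplace_eq ha r1, laplace_eq ha r2]
  ring

lemma gK_meas {a : ℝ} {w : ℂ} (ha : 0 < a) (hw : 0 < w.re) : Measurable (gK a w) := by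
  have : gK a w = fun y : ℝ => (Real.Gamma a : ℂ) * (Complex.I / 2) *
      ((w + Complex.I * y) ^ (-(a : ℂ)) - (w - Complex.I * y) ^ (-(a : ℂ))) := funext (gK_eq ha hw)
  rw [this]
  fun_prop

lemma gK_small {a : ℝ} {w : ℂ} (ha : 0 < a) (hw : 0 < w.re) :
    ∃ C : ℝ, 0 ≤ C ∧ ∀ y : ℝ, 0 < y → ‖gK a w y‖ ≤ C * y := by
  refine ⟨∫ t in Set.Ioi (0:ℝ), t ^ ((a + 1) - 1) * Real.exp (-(w.re * t)), ?_, ?_⟩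
  · exact setIntegral_nonneg measurableSet_Ioi fun t ht => by
      have : (0:ℝ) < t := ht
      positivity
  · intro y hy
    rw [← integral_mul_const]
    refine norm_integral_le_of_norm_le ((int_rpow_exp (by linarith) hw).mul_const y) ?_
    filter_upwards [ae_restrict_mem measurableSet_Ioi] with t ht
    have ht' : (0:ℝ) < t := ht
    unfold phiK
    rw [norm_mul, norm_kernel _ _ ht']
    have h := norm_sin_ofReal_le (y * t)
    push_cast at h
    rw [abs_of_pos (by positivity)] at h
    rw [show a + 1 - 1 = (a - 1) + 1 by ring, Real.rpow_add_one ht'.ne']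
    calc _ ≤ t ^ (a - 1) * Real.exp (-(w.re * t)) * (y * t) := by gcongr
      _ = _ := by ring

lemma norm_cpow_le_inv {a : ℝ} (ha : 2 ≤ a) (x : ℝ) :
    ‖(1 + Complex.I * x) ^ (-(a : ℂ))‖ ≤ (1 + x ^ 2)⁻¹ := by
  rw [← Complex.ofReal_neg, Complex.norm_cpow_real]
  have hn : ‖1 + Complex.I * (x:ℂ)‖ ^ 2 = 1 + x ^ 2 := by
    rw [Complex.sq_norm, Complex.normSq_apply]; simp; ring
  have h1 : 1 ≤ ‖1 + Complex.I * (x:ℂ)‖ := by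
    by_contra h
    have := norm_nonneg (1 + Complex.I * (x:ℂ))
    nlinarith [sq_nonneg x]
  calc _ ≤ ‖1 + Complex.I * (x:ℂ)‖ ^ (-2:ℝ) := Real.rpow_le_rpow_of_exponent_le h1 (by linarith)
    _ = _ := by rw [Real.rpow_neg (by positivity), Real.rpow_two, hn]

lemma gK_int {a α : ℝ} (hα : α ∈ Set.Ioo (0 : ℝ) 2) (ha : 2 ≤ a) (x : ℝ) :
    IntegrableOn (fun y => gK a (1 + Complex.I * x) y * ((y ^ (-α) : ℝ) : ℂ)) (Set.Ioi 0) := by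
  obtain ⟨h0, h2⟩ := hα
  have hw : 0 < (1 + Complex.I * (x:ℂ)).re := by simp
  have ha0 : 0 < a := by linarith
  have hm : Measurable (fun y : ℝ => gK a (1 + Complex.I * x) y * ((y ^ (-α) : ℝ) : ℂ)) := by
    have := gK_meas ha0 hw
    fun_prop
  rw [← Set.Ioc_union_Ioi_eq_Ioi (zero_le_one : (0:ℝ) ≤ 1), integrableOn_union]
  constructor
  · obtain ⟨C, hC, hb⟩ := gK_small ha0 hw
    have hi : IntegrableOn (fun y : ℝ => C * y ^ (1 - α)) (Set.Ioc 0 1) := by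
      have := (intervalIntegral.intervalIntegrable_rpow' (a := 0) (b := 1) (r := 1 - α) (by linarith)).const_mul C
      rwa [intervalIntegrable_iff_integrableOn_Ioc_of_le zero_le_one] at this
    refine Integrable.mono' hi hm.aestronglyMeasurable ?_
    filter_upwards [ae_restrict_mem measurableSet_Ioc] with y hy
    rw [norm_mul, Complex.norm_real, Real.norm_of_nonneg (Real.rpow_nonneg hy.1.le _), 
      show (1 - α) = -α + 1 by ring, Real.rpow_add_one hy.1.ne']
    have := hb y hy.1
    have h3 := Real.rpow_nonneg hy.1.le (-α)
    nlinarith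
  · have i1 : Integrable (fun y : ℝ => (1 + (x + y) ^ 2)⁻¹) := integrable_inv_one_add_sq.comp_add_left x
    have i2 : Integrable (fun y : ℝ => (1 + (x - y) ^ 2)⁻¹) := integrable_inv_one_add_sq.comp_sub_left x
    have hi := ((i1.add i2).const_mul (Real.Gamma a * (1 / 2))).integrableOn (s := Set.Ioi 1)
    refine Integrable.mono' hi hm.aestronglyMeasurable ?_
    filter_upwards [ae_restrict_mem measurableSet_Ioi] with y hy
    have hy1 : 1 < y := hy
    have h3 : y ^ (-α) ≤ 1 := Real.rpow_le_one_of_one_le_of_nonpos hy1.le (by linarith)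
    rw [norm_mul, Complex.norm_real, Real.norm_of_nonneg (Real.rpow_nonneg (by linarith) _)]
    have b1 := norm_cpow_le_inv ha (x + y)
    have b2 := norm_cpow_le_inv ha (x - y)
    have hG : ‖gK a (1 + Complex.I * x) y‖ ≤ Real.Gamma a * (1 / 2) * ((1 + (x + y) ^ 2)⁻¹ + (1 + (x - y) ^ 2)⁻¹) := by
      rw [gK_eq ha0 hw, norm_mul, norm_mul, Complex.norm_real, Real.norm_of_nonneg (Real.Gamma_pos_of_pos ha0).le]
      have : ‖Complex.I / 2‖ = 1 / 2 := by simp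
      rw [this]
      have hg := (Real.Gamma_pos_of_pos ha0).le
      gcongr
      refine (norm_sub_le _ _).trans (add_le_add ?_ ?_)
      · rw [show 1 + Complex.I * (x:ℂ) + Complex.I * y = 1 + Complex.I * ((x + y : ℝ) : ℂ) by push_cast; ring]
        exact b1
      · rw [show 1 + Complex.I * (x:ℂ) - Complex.I * y = 1 + Complex.I * ((x - y : ℝ) : ℂ) by push_cast; ring]
        exact b2
    calc _ ≤ ‖gK a (1 + Complex.I * x) y‖ * 1 := by gcongr
      _ ≤ _ := by rw [mul_one]; exact hG

lemma gK_laplace {a s : ℝ} {w : ℂ} (ha : 0 < a) (hw : 0 < w.re) (hs : 0 < s) :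
    ∫ y in Set.Ioi (0:ℝ), gK a w y * Complex.exp (-((s:ℂ) * y)) =
    ∫ t in Set.Ioi (0:ℝ), phiK a w t * ((t / (s ^ 2 + t ^ 2) : ℝ) : ℂ) := by
  have hint : Integrable (Function.uncurry fun (y t : ℝ) => phiK a w t * (Complex.exp (-((s:ℂ) * y)) * Complex.sin (y * t)))
      ((volume.restrict (Set.Ioi (0:ℝ))).prod (volume.restrict (Set.Ioi (0:ℝ)))) := by
    have i1 : IntegrableOn (fun y : ℝ => Complex.exp (-((s:ℂ) * y))) (Set.Ioi 0) := by
      have := integrableOn_exp_mul_complex_Ioi (a := -(s:ℂ)) (by simpa using hs) 0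
      simpa using this
    refine Integrable.mono (i1.mul_prod (phiK_int ha hw)) ?_ ?_
    · apply Measurable.aestronglyMeasurable
      simp only [Function.uncurry_def]
      fun_prop
    · refine Filter.Eventually.of_forall fun p => ?_
      simp only [Function.uncurry_def, norm_mul]
      have := norm_sin_ofReal_le_one (p.1 * p.2)
      push_cast at this
      calc _ ≤ ‖phiK a w p.2‖ * (‖Complex.exp (-((s:ℂ) * p.1))‖ * 1) := by gcongr
        _ = _ := by ring
  have := integral_integral_swap hint
  calc _ = ∫ y in Set.Ioi (0:ℝ), ∫ t in Set.Ioi (0:ℝ), phiK a w t * (Complex.exp (-((s:ℂ) * y)) * Complex.sin (y * t)) := by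
        congr 1; ext y
        rw [gK, ← integral_mul_const]
        congr 1; ext t; ring
    _ = _ := this
    _ = _ := by
        congr 1; ext t
        rw [integral_const_mul, sin_laplace hs]

lemma gK_main {a α : ℝ} (hα : α ∈ Set.Ioo (0 : ℝ) 2) (ha : 2 ≤ a) (x : ℝ) :
    (Real.Gamma α : ℂ) * ∫ y in Set.Ioi (0:ℝ), gK a (1 + Complex.I * x) y * ((y ^ (-α) : ℝ) : ℂ) =
    ((1 / 2 * Real.Gamma (α / 2) * Real.Gamma (1 - α / 2) : ℝ) : ℂ) *
      (Real.Gamma (a + α - 1) * (1 + Complex.I * x) ^ (-((a + α - 1 : ℝ) : ℂ))) := by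
  have hg := gK_int hα ha x
  have hα' := hα
  obtain ⟨h0, h2⟩ := hα'
  have hw : 0 < (1 + Complex.I * (x:ℂ)).re := by simp
  have ha0 : 0 < a := by linarith
  set w : ℂ := 1 + Complex.I * x with hwdef
  have hgm := gK_meas ha0 hw
  have hGpos := Real.Gamma_pos_of_pos h0
  -- first swap
  have hreal : ∀ y ∈ Set.Ioi (0:ℝ), ∫ s in Set.Ioi (0:ℝ), s ^ (α - 1) * Real.exp (-(y * s)) = Real.Gamma α * y ^ (-α) := by
    intro y hy
    have hy' : (0:ℝ) < y := hy
    rw [Real.integral_rpow_mul_exp_neg_mul_Ioi h0 hy, one_div, Real.inv_rpow hy'.le, Real.rpow_neg hy'.le, mul_comm]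
  have hnorm : ∀ y : ℝ, ∀ s ∈ Set.Ioi (0:ℝ), ‖gK a w y * phiK α (y:ℂ) s‖ = ‖gK a w y‖ * (s ^ (α - 1) * Real.exp (-(y * s))) := by
    intro y s hs
    unfold phiK
    rw [norm_mul, norm_kernel _ _ hs, Complex.ofReal_re]
  have hint1 : Integrable (Function.uncurry fun (y s : ℝ) => gK a w y * phiK α (y:ℂ) s)
      ((volume.restrict (Set.Ioi (0:ℝ))).prod (volume.restrict (Set.Ioi (0:ℝ)))) := by
    rw [integrable_prod_iff]
    · constructor
      · filter_upwards [ae_restrict_mem measurableSet_Ioi] with y hy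
        exact (phiK_int (w := (y:ℂ)) h0 (by simpa using hy)).const_mul (gK a w y)
      · refine (integrableOn_congr_fun (g := fun y => Real.Gamma α * ‖gK a w y * ((y ^ (-α) : ℝ) : ℂ)‖)
          (fun y hy => ?_) measurableSet_Ioi).mpr (hg.norm.const_mul _)
        have hy' : (0:ℝ) < y := hy
        simp only [Function.uncurry]
        rw [setIntegral_congr_fun measurableSet_Ioi (hnorm y), integral_const_mul, hreal y hy, norm_mul,
          Complex.norm_real, Real.norm_of_nonneg (by positivity)]
        ring
    · apply Measurable.aestronglyMeasurable
      unfold phiK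
      simp only [Function.uncurry_def]
      fun_prop
  -- third swap
  have hnorm3 : ∀ t ∈ Set.Ioi (0:ℝ), ∀ s ∈ Set.Ioi (0:ℝ), ‖phiK a w t * ((s ^ (α - 1) * (t / (s ^ 2 + t ^ 2)) : ℝ) : ℂ)‖ =
      ‖phiK a w t‖ * (s ^ (α - 1) * (t / (s ^ 2 + t ^ 2))) := by
    intro t ht s hs
    have ht' : (0:ℝ) < t := ht
    have hs' : (0:ℝ) < s := hs
    rw [norm_mul, Complex.norm_real, Real.norm_of_nonneg (by positivity)]
  have hphi : ∀ t ∈ Set.Ioi (0:ℝ), phiK a w t * ((t ^ (α - 1) : ℝ) : ℂ) = phiK (a + α - 1) w t := by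
    intro t ht
    have ht' : (0:ℝ) < t := ht
    unfold phiK
    rw [show a + α - 1 - 1 = (a - 1) + (α - 1) by ring, Real.rpow_add ht']
    push_cast; ring
  have hint3 : Integrable (Function.uncurry fun (s t : ℝ) => phiK a w t * ((s ^ (α - 1) * (t / (s ^ 2 + t ^ 2)) : ℝ) : ℂ))
      ((volume.restrict (Set.Ioi (0:ℝ))).prod (volume.restrict (Set.Ioi (0:ℝ)))) := by
    rw [integrable_prod_iff']
    · constructor
      · filter_upwards [ae_restrict_mem measurableSet_Ioi] with t ht
        exact (Integrable.ofReal (𝕜 := ℂ) (Kint hα ht).1).const_mul (phiK a w t)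
      · refine (integrableOn_congr_fun (g := fun t => (1 / 2 * Real.Gamma (α / 2) * Real.Gamma (1 - α / 2)) * ‖phiK (a + α - 1) w t‖)
          (fun t ht => ?_) measurableSet_Ioi).mpr ((phiK_int (by linarith) hw).norm.const_mul _)
        have ht' : (0:ℝ) < t := ht
        simp only [Function.uncurry]
        rw [setIntegral_congr_fun measurableSet_Ioi (hnorm3 t ht), integral_const_mul, (Kint hα ht).2, ← hphi t ht, norm_mul,
          Complex.norm_real, Real.norm_of_nonneg (by positivity)]
        ring
    · apply Measurable.aestronglyMeasurable
      simp only [Function.uncurry_def]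
      fun_prop
  calc _ = ∫ y in Set.Ioi (0:ℝ), ∫ s in Set.Ioi (0:ℝ), gK a w y * phiK α (y:ℂ) s := by
        rw [← integral_const_mul]
        refine setIntegral_congr_fun measurableSet_Ioi fun y hy => ?_
        have hc := congrArg (fun r : ℝ => (r : ℂ)) (hreal y hy)
        simp only [← integral_complex_ofReal] at hc
        simp only [integral_const_mul, phiK]
        push_cast at hc ⊢
        rw [hc]; ring
    _ = ∫ s in Set.Ioi (0:ℝ), ∫ y in Set.Ioi (0:ℝ), gK a w y * phiK α (y:ℂ) s := integral_integral_swap hint1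
    _ = ∫ s in Set.Ioi (0:ℝ), ∫ t in Set.Ioi (0:ℝ), phiK a w t * ((s ^ (α - 1) * (t / (s ^ 2 + t ^ 2)) : ℝ) : ℂ) := by
        refine setIntegral_congr_fun measurableSet_Ioi fun s hs => ?_
        have hl := gK_laplace ha0 hw hs
        calc _ = ((s ^ (α - 1) : ℝ) : ℂ) * ∫ y in Set.Ioi (0:ℝ), gK a w y * Complex.exp (-((s:ℂ) * y)) := by
              rw [← integral_const_mul]
              congr 1; ext y
              unfold phiK
              rw [mul_comm (y:ℂ)]; ring
          _ = _ := by
              rw [hl, ← integral_const_mul]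
              congr 1; ext t
              push_cast; ring
    _ = ∫ t in Set.Ioi (0:ℝ), ∫ s in Set.Ioi (0:ℝ), phiK a w t * ((s ^ (α - 1) * (t / (s ^ 2 + t ^ 2)) : ℝ) : ℂ) :=
        integral_integral_swap hint3
    _ = ∫ t in Set.Ioi (0:ℝ), ((1 / 2 * Real.Gamma (α / 2) * Real.Gamma (1 - α / 2) : ℝ) : ℂ) * phiK (a + α - 1) w t := by
        refine setIntegral_congr_fun measurableSet_Ioi fun t ht => ?_
        simp only [integral_const_mul]
        rw [integral_complex_ofReal, (Kint hα ht).2, ← hphi t ht]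
        push_cast; ring
    _ = _ := by
        rw [integral_const_mul]
        unfold phiK
        rw [laplace_eq (by linarith) hw]

lemma gbinom_nat (N k : ℕ) : gbinom (N : ℂ) k = (N.choose k : ℂ) := by
  have h : ∏ i ∈ Finset.range k, ((N : ℂ) - (i : ℂ)) = (N.descFactorial k : ℂ) := by
    induction k with
    | zero => simp
    | succ k ih =>
      rw [Finset.prod_range_succ, ih, Nat.descFactorial_succ]
      by_cases hk : k ≤ N
      · rw [Nat.cast_mul, Nat.cast_sub hk]; ring
      · rw [Nat.descFactorial_eq_zero_iff_lt.mpr (by omega)]; simp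
  rw [gbinom, h, Nat.descFactorial_eq_factorial_mul_choose]
  push_cast
  rw [mul_div_cancel_left₀]
  exact_mod_cast Nat.factorial_ne_zero k

lemma gamma_gbinom {α : ℝ} (hα : 0 < α) (k : ℕ) :
    (Real.Gamma (1 + α) : ℂ) * gbinom (-1 - (α : ℂ)) k =
      (-1) ^ k * (Real.Gamma ((k : ℝ) + 2 + α - 1) : ℂ) / (k.factorial : ℂ) := by
  rw [gbinom, mul_div_assoc']
  congr 1
  induction k with
  | zero =>
    rw [show ((0 : ℕ) : ℝ) + 2 + α - 1 = 1 + α by push_cast; ring]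
    simp
  | succ k ih =>
    rw [Finset.prod_range_succ, ← mul_assoc, ih]
    have : ((k + 1 : ℕ) : ℝ) + 2 + α - 1 = ((k : ℝ) + 2 + α - 1) + 1 := by push_cast; ring
    rw [this, Real.Gamma_add_one (by have : (0:ℝ) ≤ k := k.cast_nonneg
                                     linarith)]
    push_cast; ring

lemma const_eq {α : ℝ} (hα : α ∈ Set.Ioo (0 : ℝ) 2) :
    cFrac α / α * (2 * (1 / 2 * Real.Gamma (α / 2) * Real.Gamma (1 - α / 2))) = Real.Gamma α := by
  obtain ⟨h0, h2⟩ := hα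
  have hd := Real.Gamma_mul_Gamma_add_half (α / 2)
  rw [show 2 * (α / 2) = α by ring] at hd
  have p1 : Real.Gamma (1 - α / 2) ≠ 0 := (Real.Gamma_pos_of_pos (by linarith)).ne'
  have p2 : Real.sqrt Real.pi ≠ 0 := by positivity
  have p3 : (2:ℝ) ^ (1 - α) * 2 ^ (α - 1) = 1 := by
    rw [← Real.rpow_add two_pos]; simp
  unfold cFrac
  rw [show 1 / 2 + α / 2 = α / 2 + 1 / 2 by ring]
  have : α * 2 ^ (α - 1) * Real.Gamma (α / 2 + 1 / 2) / (√Real.pi * Real.Gamma (1 - α / 2)) / α *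
      (2 * (1 / 2 * Real.Gamma (α / 2) * Real.Gamma (1 - α / 2))) =
      2 ^ (α - 1) * (Real.Gamma (α / 2) * Real.Gamma (α / 2 + 1 / 2)) / √Real.pi := by
    field_simp
  rw [this, hd, div_eq_iff p2]
  linear_combination (Real.Gamma α * √Real.pi) * p3

lemma ixp_ne (x : ℝ) : Complex.I * (x:ℂ) + 1 ≠ 0 := by
  intro h
  have := congrArg Complex.re h
  simp at this

lemma higgins_expand (N : ℕ) (x : ℝ) : higgins (N : ℤ) x =
    ∑ k ∈ Finset.range N, (N.choose (k + 1) : ℂ) * (-2) ^ (k + 1) * ((Complex.I * (x:ℂ) + 1)⁻¹) ^ (k + 1) + 1 := by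
  have h := ixp_ne x
  unfold higgins
  rw [zpow_natCast, show (Complex.I * (x : ℂ) - 1) / (Complex.I * (x : ℂ) + 1) = (-2 * (Complex.I * (x:ℂ) + 1)⁻¹) + 1 by
    field_simp; ring, add_pow, Finset.sum_range_succ']
  congr 1
  · apply Finset.sum_congr rfl
    intro k _
    rw [mul_pow]; simp; ring
  · simp

lemma higgins'_expand (N : ℕ) (x : ℝ) : higgins' (N : ℤ) x =
    ∑ k ∈ Finset.range N, (N.choose (k + 1) : ℂ) * (-2) ^ (k + 1) *
      (-((k : ℂ) + 1) * Complex.I * ((Complex.I * (x:ℂ) + 1)⁻¹) ^ (k + 2)) := by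
  unfold higgins'
  rw [funext (higgins_expand N)]
  apply HasDerivAt.deriv
  apply HasDerivAt.add_const
  apply HasDerivAt.fun_sum
  intro k _
  apply HasDerivAt.const_mul
  have h1 : HasDerivAt (fun x : ℝ => Complex.I * (x:ℂ) + 1) (Complex.I * 1) x :=
    ((Complex.ofRealCLM.hasDerivAt (x := x)).const_mul Complex.I).add_const 1
  refine ((h1.inv (ixp_ne x)).pow (k + 1)).congr_deriv ?_
  have := ixp_ne x
  simp only [Nat.add_sub_cancel, Pi.inv_apply]
  push_cast
  rw [pow_add _ k 2, inv_pow _ 2]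
  generalize ((Complex.I * (x:ℂ) + 1)⁻¹) ^ k = A
  field_simp

lemma cpow_neg_nat (z : ℂ) (k : ℕ) : z ^ (-((((k : ℝ) + 2 : ℝ)) : ℂ)) = (z⁻¹) ^ (k + 2) := by
  rw [Complex.cpow_neg, inv_pow, ← Complex.cpow_natCast]
  push_cast; rfl

lemma higgins'_diff (N : ℕ) (x y : ℝ) : higgins' (N : ℤ) (x - y) - higgins' (N : ℤ) (x + y) =
    ∑ k ∈ Finset.range N, ((N.choose (k + 1) : ℂ) * (-2) ^ (k + 1) * (2 / (k.factorial : ℂ))) *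
      gK ((k : ℝ) + 2) (1 + Complex.I * x) y := by
  rw [higgins'_expand, higgins'_expand, ← Finset.sum_sub_distrib]
  apply Finset.sum_congr rfl
  intro k _
  have hw : 0 < (1 + Complex.I * (x:ℂ)).re := by simp
  rw [gK_eq (by positivity) hw, cpow_neg_nat, cpow_neg_nat]
  have hG : Real.Gamma ((k : ℝ) + 2) = ((k + 1).factorial : ℝ) := by
    rw [← Real.Gamma_nat_eq_factorial]; push_cast; congr 1; ring
  rw [hG, Nat.factorial_succ]
  have hf : (k.factorial : ℂ) ≠ 0 := by exact_mod_cast Nat.factorial_ne_zero k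
  rw [show Complex.I * ((x - y : ℝ) : ℂ) + 1 = 1 + Complex.I * x - Complex.I * y by push_cast; ring,
    show Complex.I * ((x + y : ℝ) : ℂ) + 1 = 1 + Complex.I * x + Complex.I * y by push_cast; ring]
  generalize ((1 + Complex.I * (x:ℂ) - Complex.I * y)⁻¹) ^ (k + 2) = A
  generalize ((1 + Complex.I * (x:ℂ) + Complex.I * y)⁻¹) ^ (k + 2) = B
  push_cast
  field_simp
  ring

lemma fracLap_pos (α : ℝ) (hα : α ∈ Set.Ioo (0 : ℝ) 2) (N : ℕ) (x : ℝ) :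
    IntegrableOn (fun y : ℝ =>
        (higgins' (N : ℤ) (x - y) - higgins' (N : ℤ) (x + y)) * ((y ^ (-α) : ℝ) : ℂ)) (Set.Ioi 0) ∧
    ((cFrac α / α : ℝ) : ℂ) *
        ∫ y in Set.Ioi (0 : ℝ),
          (higgins' (N : ℤ) (x - y) - higgins' (N : ℤ) (x + y)) * ((y ^ (-α) : ℝ) : ℂ) =
      -(2 * (Real.Gamma (1 + α) : ℂ) /
            (Complex.I * (x : ℂ) + 1) ^ ((1 : ℂ) + (α : ℂ))) *
        ∑ k ∈ Finset.range N,
          gbinom (N : ℂ) (k + 1) * gbinom (-1 - (α : ℂ)) k *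
            (2 / (Complex.I * (x : ℂ) + 1)) ^ k := by
  have h2a : ∀ k : ℕ, (2:ℝ) ≤ (k:ℝ) + 2 := fun k => by
    have : (0:ℝ) ≤ k := k.cast_nonneg
    linarith
  have hi : ∀ k : ℕ, IntegrableOn (fun y : ℝ => ((N.choose (k + 1) : ℂ) * (-2) ^ (k + 1) * (2 / (k.factorial : ℂ))) *
      (gK ((k : ℝ) + 2) (1 + Complex.I * x) y * ((y ^ (-α) : ℝ) : ℂ))) (Set.Ioi 0) := fun k =>
    (gK_int hα (h2a k) x).const_mul _
  have he : (fun y : ℝ => (higgins' (N : ℤ) (x - y) - higgins' (N : ℤ) (x + y)) * ((y ^ (-α) : ℝ) : ℂ)) =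
      fun y : ℝ => ∑ k ∈ Finset.range N, ((N.choose (k + 1) : ℂ) * (-2) ^ (k + 1) * (2 / (k.factorial : ℂ))) *
      (gK ((k : ℝ) + 2) (1 + Complex.I * x) y * ((y ^ (-α) : ℝ) : ℂ)) := by
    ext y
    rw [higgins'_diff, Finset.sum_mul]
    exact Finset.sum_congr rfl fun k _ => by ring
  rw [he]
  refine ⟨integrable_finsetSum _ fun k _ => hi k, ?_⟩
  rw [integral_finsetSum _ fun k _ => hi k, Finset.mul_sum, Finset.mul_sum]
  apply Finset.sum_congr rfl
  intro k _
  have hG : (Real.Gamma α : ℂ) ≠ 0 := by exact_mod_cast (Real.Gamma_pos_of_pos hα.1).ne'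
  have hw := ixp_ne x
  have hm := gK_main hα (h2a k) x
  have hc : ((cFrac α / α : ℝ) : ℂ) * (2 * ((1 / 2 * Real.Gamma (α / 2) * Real.Gamma (1 - α / 2) : ℝ) : ℂ)) = (Real.Gamma α : ℂ) := by
    exact_mod_cast const_eq hα
  rw [add_comm (1:ℂ) (Complex.I * x)] at hm ⊢
  have hb := gamma_gbinom hα.1 k
  have hp : (Complex.I * (x:ℂ) + 1) ^ (-(((k : ℝ) + 2 + α - 1 : ℝ) : ℂ)) =
      ((Complex.I * (x:ℂ) + 1) ^ ((1 : ℂ) + (α : ℂ)))⁻¹ * ((Complex.I * (x:ℂ) + 1) ^ k)⁻¹ := by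
    rw [Complex.cpow_neg, ← mul_inv, ← Complex.cpow_natCast _ k, ← Complex.cpow_add _ _ hw]
    congr 2; push_cast; ring
  rw [hp] at hm
  rw [integral_const_mul, gbinom_nat, div_pow]
  have hf : (k.factorial : ℂ) ≠ 0 := by exact_mod_cast Nat.factorial_ne_zero k
  apply mul_left_cancel₀ hG
  generalize (∫ y in Set.Ioi (0:ℝ), gK ((k : ℝ) + 2) (Complex.I * x + 1) y * ((y ^ (-α) : ℝ) : ℂ)) = J at *
  generalize (((Complex.I * (x:ℂ) + 1) ^ ((1 : ℂ) + (α : ℂ)))) = P at *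
  generalize ((Complex.I * (x:ℂ) + 1) ^ k) = Q at *
  generalize ((1 / 2 * Real.Gamma (α / 2) * Real.Gamma (1 - α / 2) : ℝ) : ℂ) = K at *
  generalize ((cFrac α / α : ℝ) : ℂ) = c at *
  have e1 : (Real.Gamma α : ℂ) * (-(2 * (Real.Gamma (1 + α) : ℂ) / P) * ((N.choose (k + 1) : ℂ) * gbinom (-1 - (α : ℂ)) k * (2 ^ k / Q))) =
     (Real.Gamma α : ℂ) * (-2 * (N.choose (k+1) : ℂ) * 2 ^ k * (P⁻¹ * Q⁻¹)) * ((Real.Gamma (1 + α) : ℂ) * gbinom (-1 - (α : ℂ)) k) := by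
    simp only [div_eq_mul_inv]; ring
  have e2 : (Real.Gamma α : ℂ) * (c * ((N.choose (k + 1) : ℂ) * (-2) ^ (k + 1) * (2 / (k.factorial : ℂ)) * J)) =
     c * ((N.choose (k + 1) : ℂ) * (-2) ^ (k + 1) * (2 / (k.factorial : ℂ))) * ((Real.Gamma α : ℂ) * J) := by ring
  rw [e1, e2, hb, hm, ← hc, show (-2:ℂ) = (-1) * 2 by norm_num, mul_pow]
  simp only [div_eq_mul_inv]
  ring

lemma higgins_neg (n : ℤ) (x : ℝ) : higgins (-n) x = higgins n (-x) := by
  unfold higgins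
  rw [zpow_neg, ← inv_zpow, inv_div]
  congr 1
  push_cast
  rw [show Complex.I * -(x:ℂ) - 1 = -(Complex.I * x + 1) by ring,
    show Complex.I * -(x:ℂ) + 1 = -(Complex.I * x - 1) by ring, neg_div_neg_eq]

lemma higgins'_neg (n : ℤ) (x : ℝ) : higgins' (-n) x = -higgins' n (-x) := by
  unfold higgins'
  rw [funext (higgins_neg n)]
  exact deriv_comp_neg _ _

theorem fracLap_higgins (α : ℝ) (hα : α ∈ Set.Ioo (0 : ℝ) 2) (n : ℤ) (hn : n ≠ 0) (x : ℝ) :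
    IntegrableOn (fun y : ℝ =>
        (higgins' n (x - y) - higgins' n (x + y)) * ((y ^ (-α) : ℝ) : ℂ)) (Set.Ioi 0) ∧
    ((cFrac α / α : ℝ) : ℂ) *
        ∫ y in Set.Ioi (0 : ℝ),
          (higgins' n (x - y) - higgins' n (x + y)) * ((y ^ (-α) : ℝ) : ℂ) =
      -(2 * (Real.Gamma (1 + α) : ℂ) /
            (Complex.I * (n.sign : ℂ) * (x : ℂ) + 1) ^ ((1 : ℂ) + (α : ℂ))) *
        ∑ k ∈ Finset.range n.natAbs,
          gbinom (n.natAbs : ℂ) (k + 1) * gbinom (-1 - (α : ℂ)) k *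
            (2 / (Complex.I * (n.sign : ℂ) * (x : ℂ) + 1)) ^ k := by
  rcases lt_or_gt_of_ne hn with h | h
  · have hn' : n = -(n.natAbs : ℤ) := by omega
    have hs : n.sign = -1 := Int.sign_eq_neg_one_of_neg h
    have key := fracLap_pos α hα n.natAbs (-x)
    have e : ∀ y : ℝ, higgins' n (x - y) - higgins' n (x + y) =
        higgins' (n.natAbs : ℤ) (-x - y) - higgins' (n.natAbs : ℤ) (-x + y) := by
      intro y
      have e1 : ∀ z, higgins' n z = -higgins' (n.natAbs : ℤ) (-z) := by
        intro z
        conv_lhs => rw [hn']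
        exact higgins'_neg _ _
      rw [e1, e1, show -(x - y) = -x + y by ring, show -(x + y) = -x - y by ring]
      ring
    simp only [e, hs]
    rw [show Complex.I * ((-1 : ℤ) : ℂ) * (x:ℂ) + 1 = Complex.I * ((-x : ℝ) : ℂ) + 1 by push_cast; ring]
    exact key
  · have hn' : (n.natAbs : ℤ) = n := by omega
    have hs : n.sign = 1 := Int.sign_eq_one_of_pos h
    have key := fracLap_pos α hα n.natAbs x
    rw [hn'] at key
    rw [hs, show Complex.I * ((1 : ℤ) : ℂ) * (x:ℂ) + 1 = Complex.I * (x : ℂ) + 1 by push_cast; ring]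
    exact key
end

section
/- Let α ∈ (0,2), m ∈ ℕ, set n = −1−m (so n ≤ −1), and let x ∈ ℝ. Then the function y ↦ (μ_n'(x−y) − μ_n'(x+y))·y^(−α) is absolutely integrable on (0,∞), and (c_α/α)·∫₀^∞ (μ_n'(x−y) − μ_n'(x+y))·y^(−α) dy = −(Γ(1+α)/(1−ix)^(1+α)) · ∑_{k=0}^{m} C(m,k)·C(−1−α,k)·(2/(1−ix))^k. (The right-hand side is −(Γ(1+α)/(−ix+1)^(1+α))·₂F₁(1+n, 1+α; 1; 2/(−ix+1)).) -/
open MeasureTheory Finset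

section Aux

open Set Filter Topology

lemma aux_int_real {q b : ℝ} (hq : -1 < q) (hb : 0 < b) :
    IntegrableOn (fun t : ℝ => t ^ q * Real.exp (-(b * t))) (Ioi 0) := by
  have := integrableOn_rpow_mul_exp_neg_mul_rpow hq one_pos hb
  simpa using this

lemma aux_norm {q : ℝ} {w : ℂ} {t : ℝ} (ht : 0 < t) :
    ‖((t ^ q : ℝ) : ℂ) * Complex.exp (-(w * t))‖ = t ^ q * Real.exp (-(w.re * t)) := by
  rw [norm_mul, Complex.norm_exp, Complex.norm_real, Real.norm_of_nonneg (by positivity)]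
  simp

lemma aux_meas (q : ℝ) (w : ℂ) :
    Measurable (fun t : ℝ => ((t ^ q : ℝ) : ℂ) * Complex.exp (-(w * t))) := by
  fun_prop

lemma aux_int {q : ℝ} {w : ℂ} (hq : -1 < q) (hw : 0 < w.re) :
    IntegrableOn (fun t : ℝ => ((t ^ q : ℝ) : ℂ) * Complex.exp (-(w * t))) (Ioi 0) := by
  refine (aux_int_real hq hw).mono' (aux_meas q w).aestronglyMeasurable ?_
  filter_upwards [self_mem_ae_restrict measurableSet_Ioi] with t ht
  exact (aux_norm ht).le

lemma aux_laplace_deriv {a : ℝ} (ha : 0 < a) {w : ℂ} (hw : 0 < w.re) :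
    DifferentiableAt ℂ
      (fun w : ℂ => ∫ t in Ioi (0:ℝ), ((t ^ (a - 1) : ℝ) : ℂ) * Complex.exp (-(w * t))) w := by
  have hs : {z : ℂ | w.re / 2 < z.re} ∈ 𝓝 w :=
    (isOpen_lt continuous_const Complex.continuous_re).mem_nhds
      (show w.re / 2 < w.re by linarith)
  refine (hasDerivAt_integral_of_dominated_loc_of_deriv_le
    (F := fun (w : ℂ) (t : ℝ) => ((t ^ (a - 1) : ℝ) : ℂ) * Complex.exp (-(w * t)))
    (F' := fun (w : ℂ) (t : ℝ) => ((t ^ (a - 1) : ℝ) : ℂ) * (Complex.exp (-(w * t)) * (-(t : ℂ))))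
    (bound := fun t => t ^ a * Real.exp (-(w.re / 2 * t))) hs
    (Eventually.of_forall fun z => (aux_meas _ z).aestronglyMeasurable)
    (aux_int (by linarith) hw)
    (Measurable.aestronglyMeasurable (by fun_prop))
    ?_ (aux_int_real (by linarith) (by linarith)) ?_).2.differentiableAt
  · filter_upwards [self_mem_ae_restrict measurableSet_Ioi] with t ht z hz
    have ht : 0 < t := ht
    have hz : w.re / 2 < z.re := hz
    rw [← mul_assoc, norm_mul, aux_norm ht, norm_neg, Complex.norm_real, Real.norm_of_nonneg ht.le]
    have : t ^ a = t ^ (a - 1) * t := by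
      rw [← Real.rpow_add_one ht.ne']; congr 1; ring
    rw [this]
    have : Real.exp (-(z.re * t)) ≤ Real.exp (-(w.re / 2 * t)) := by
      apply Real.exp_le_exp.2; nlinarith
    have h2 : 0 ≤ t ^ (a - 1) * t := by positivity
    nlinarith [mul_le_mul_of_nonneg_left this h2]
  · filter_upwards with t z hz
    apply HasDerivAt.const_mul
    have h := ((hasDerivAt_id z).mul_const (t : ℂ)).neg.cexp
    simpa using h

lemma aux_laplace {a : ℝ} (ha : 0 < a) {w : ℂ} (hw : 0 < w.re) :
    ∫ t in Ioi (0:ℝ), ((t ^ (a - 1) : ℝ) : ℂ) * Complex.exp (-(w * t)) =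
      (Real.Gamma a : ℂ) * w ^ (-(a : ℂ)) := by
  have hop : IsOpen {z : ℂ | 0 < z.re} := isOpen_lt continuous_const Complex.continuous_re
  have hpre : IsPreconnected {z : ℂ | 0 < z.re} :=
    (convex_halfSpace_re_gt 0).isPreconnected
  have h1 : AnalyticOnNhd ℂ (fun w : ℂ => ∫ t in Ioi (0:ℝ),
      ((t ^ (a - 1) : ℝ) : ℂ) * Complex.exp (-(w * t))) {z : ℂ | 0 < z.re} :=
    DifferentiableOn.analyticOnNhd
      (fun z hz => (aux_laplace_deriv ha hz).differentiableWithinAt) hop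
  have h2 : AnalyticOnNhd ℂ (fun w : ℂ => (Real.Gamma a : ℂ) * w ^ (-(a : ℂ)))
      {z : ℂ | 0 < z.re} := by
    refine DifferentiableOn.analyticOnNhd (fun z hz => ?_) hop
    refine DifferentiableAt.differentiableWithinAt ?_
    refine (DifferentiableAt.cpow_const differentiableAt_id (Or.inl hz)).const_mul _
  refine h1.eqOn_of_preconnected_of_frequently_eq h2 hpre (z₀ := 1) (by simp) ?_ hw
  have hreal : ∀ r : ℝ, 0 < r → (∫ t in Ioi (0:ℝ),
      ((t ^ (a - 1) : ℝ) : ℂ) * Complex.exp (-((r:ℂ) * t))) =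
        (Real.Gamma a : ℂ) * (r:ℂ) ^ (-(a : ℂ)) := by
    intro r hr
    have := Real.integral_rpow_mul_exp_neg_mul_Ioi ha hr
    have h3 := congrArg (fun x : ℝ => (x : ℂ)) this
    beta_reduce at h3
    rw [← integral_complex_ofReal] at h3
    push_cast at h3
    push_cast
    rw [h3, mul_comm, Complex.ofReal_cpow (by positivity)]
    rw [Complex.cpow_neg, ← Complex.ofReal_cpow hr.le, ← Complex.ofReal_cpow (by positivity), one_div, Real.inv_rpow hr.le]
    push_cast
    rfl
  have htend : Tendsto (fun n : ℕ => ((1 + 1 / ((n : ℝ) + 1) : ℝ) : ℂ)) atTop (𝓝[≠] 1) := by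
    rw [tendsto_nhdsWithin_iff]
    constructor
    · have := (tendsto_one_div_add_atTop_nhds_zero_nat (𝕜 := ℝ)).const_add 1
      have h4 := (Complex.continuous_ofReal.tendsto _).comp this
      simpa [Function.comp_def] using h4
    · refine Eventually.of_forall fun n => ?_
      simp only [mem_compl_iff, mem_singleton_iff]
      norm_cast
      have : 0 < 1 / ((n : ℝ) + 1) := by positivity
      intro h
      push_cast at h
      linarith
  refine htend.frequently (Frequently.of_forall fun n => ?_)
  exact hreal _ (by positivity)

lemma aux_fub (g : ℝ → ℂ) (K : ℝ → ℝ → ℝ) (k : ℝ → ℝ)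
    (hg : AEStronglyMeasurable g (volume.restrict (Ioi (0:ℝ))))
    (hK : Measurable (Function.uncurry K))
    (hpos : ∀ y, 0 < y → ∀ s, 0 < s → 0 ≤ K y s)
    (hint : ∀ y, 0 < y → IntegrableOn (K y) (Ioi 0))
    (hk : ∀ y, 0 < y → ∫ s in Ioi (0:ℝ), K y s = k y)
    (hgk : IntegrableOn (fun y => g y * (k y : ℂ)) (Ioi 0)) :
    IntegrableOn (fun s => ∫ y in Ioi (0:ℝ), g y * (K y s : ℂ)) (Ioi 0) ∧
    ∫ s in Ioi (0:ℝ), ∫ y in Ioi (0:ℝ), g y * (K y s : ℂ) =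
      ∫ y in Ioi (0:ℝ), g y * (k y : ℂ) := by
  have key : Integrable (Function.uncurry fun y s => g y * (K y s : ℂ))
      ((volume.restrict (Ioi (0:ℝ))).prod (volume.restrict (Ioi (0:ℝ)))) := by
    have hm : AEStronglyMeasurable (Function.uncurry fun y s => g y * (K y s : ℂ))
        ((volume.restrict (Ioi (0:ℝ))).prod (volume.restrict (Ioi (0:ℝ)))) := by
      have h1 := hg.comp_fst (ν := volume.restrict (Ioi (0:ℝ)))
      exact h1.mul (Complex.measurable_ofReal.comp hK).aestronglyMeasurable
    rw [integrable_prod_iff hm]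
    constructor
    · filter_upwards [self_mem_ae_restrict measurableSet_Ioi] with y hy
      exact ((hint y hy).ofReal (𝕜 := ℂ)).const_mul (g y)
    · refine hgk.norm.congr ?_
      filter_upwards [self_mem_ae_restrict measurableSet_Ioi] with y hy
      have hy : 0 < y := hy
      have hk0 : 0 ≤ k y := by
        rw [← hk y hy]
        exact setIntegral_nonneg measurableSet_Ioi (fun s hs => hpos y hy s hs)
      rw [norm_mul, Complex.norm_real, Real.norm_of_nonneg hk0, ← hk y hy, ← integral_const_mul]
      refine setIntegral_congr_fun measurableSet_Ioi (fun s hs => ?_)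
      simp only [Function.uncurry]
      rw [norm_mul, Complex.norm_real, Real.norm_of_nonneg (hpos y hy s hs)]
  refine ⟨key.integral_prod_right, ?_⟩
  rw [← integral_integral_swap key]
  refine setIntegral_congr_fun measurableSet_Ioi (fun y hy => ?_)
  rw [integral_const_mul, integral_complex_ofReal, hk y hy]

lemma aux_K {α : ℝ} (h0 : 0 < α) (h2 : α < 2) {t : ℝ} (ht : 0 < t) :
    IntegrableOn (fun s : ℝ => s ^ (α - 1) * (t / (s ^ 2 + t ^ 2))) (Ioi 0) ∧
    ∫ s in Ioi (0:ℝ), s ^ (α - 1) * (t / (s ^ 2 + t ^ 2)) =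
      Real.Gamma (α / 2) * Real.Gamma (1 - α / 2) / 2 * t ^ (α - 1) := by
  have hg0 : IntegrableOn (fun r : ℝ => r ^ (1 - α / 2 - 1) * Real.exp (-(t ^ 2 * r))) (Ioi 0) :=
    aux_int_real (by linarith) (by positivity)
  have H := aux_fub (fun r => ((t * Real.exp (-(t ^ 2 * r)) : ℝ) : ℂ))
    (fun r s => s ^ (α - 1) * Real.exp (-(r * s ^ 2)))
    (fun r => r ^ (1 - α / 2 - 1) * (Real.Gamma (α / 2) / 2))
    (Measurable.aestronglyMeasurable (by fun_prop))
    (by unfold Function.uncurry; fun_prop)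
    (fun r hr s hs => by positivity)
    (fun r hr => by
      have := integrableOn_rpow_mul_exp_neg_mul_sq hr (s := α - 1) (by linarith)
      simpa using this)
    (fun r hr => by
      have := integral_rpow_mul_exp_neg_mul_rpow (p := 2) (q := α - 1) two_pos (by linarith) hr
      simp only [Real.rpow_two, neg_mul, sub_add_cancel] at this
      rw [this, show 1 - α / 2 - 1 = -α / 2 by ring]; ring)
    (by
      have h3 := (hg0.const_mul (t * (Real.Gamma (α / 2) / 2))).ofReal (𝕜 := ℂ)
      refine h3.congr (Eventually.of_forall fun r => ?_)
      simp only [RCLike.ofReal_eq_complex_ofReal]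
      push_cast; ring)
  have hin : ∀ s : ℝ, 0 < s → (∫ r in Ioi (0:ℝ), ((t * Real.exp (-(t ^ 2 * r)) : ℝ) : ℂ) *
      ((s ^ (α - 1) * Real.exp (-(r * s ^ 2)) : ℝ) : ℂ)) =
      ((s ^ (α - 1) * (t / (s ^ 2 + t ^ 2)) : ℝ) : ℂ) := by
    intro s hs
    have := integral_exp_mul_Ioi (a := -(s ^ 2 + t ^ 2)) (by nlinarith [sq_pos_of_pos hs, sq_pos_of_pos ht]) 0
    have h4 : (fun r : ℝ => ((t * Real.exp (-(t ^ 2 * r)) : ℝ) : ℂ) *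
      ((s ^ (α - 1) * Real.exp (-(r * s ^ 2)) : ℝ) : ℂ)) = fun r : ℝ =>
        ((s ^ (α - 1) * t * Real.exp (-(s ^ 2 + t ^ 2) * r) : ℝ) : ℂ) := by
      funext r
      rw [← Complex.ofReal_mul]
      congr 1
      rw [show -(s ^ 2 + t ^ 2) * r = -(t ^ 2 * r) + -(r * s ^ 2) by ring, Real.exp_add]
      ring
    rw [h4, integral_complex_ofReal, integral_const_mul, this]
    congr 1
    have : s ^ 2 + t ^ 2 ≠ 0 := by positivity
    simp only [mul_zero, Real.exp_zero]
    field_simp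
  obtain ⟨H1, H2⟩ := H
  have H1' : IntegrableOn (fun s : ℝ => ((s ^ (α - 1) * (t / (s ^ 2 + t ^ 2)) : ℝ) : ℂ)) (Ioi 0) :=
    H1.congr_fun (fun s hs => hin s hs) measurableSet_Ioi
  constructor
  · exact H1'.re
  · rw [setIntegral_congr_fun measurableSet_Ioi (fun s hs => hin s hs)] at H2
    have h5 : (fun r : ℝ => ((t * Real.exp (-(t ^ 2 * r)) : ℝ) : ℂ) *
      ((r ^ (1 - α / 2 - 1) * (Real.Gamma (α / 2) / 2) : ℝ) : ℂ)) = fun r : ℝ =>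
        ((t * (Real.Gamma (α / 2) / 2) * (r ^ (1 - α / 2 - 1) * Real.exp (-(t ^ 2 * r))) : ℝ) : ℂ) := by
      funext r
      push_cast; ring
    rw [h5, integral_complex_ofReal, integral_complex_ofReal, integral_const_mul,
      Real.integral_rpow_mul_exp_neg_mul_Ioi (by linarith) (by positivity)] at H2
    rw [Complex.ofReal_inj.1 H2]
    have : (1 / t ^ 2) ^ (1 - α / 2) = t ^ (α - 2) := by
      rw [one_div, ← Real.rpow_two, ← Real.rpow_neg ht.le, ← Real.rpow_mul ht.le]
      congr 1; ring
    rw [this, show α - 1 = α - 2 + 1 by ring, Real.rpow_add_one ht.ne']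
    ring

lemma aux_sin {s : ℝ} (hs : 0 < s) (t : ℝ) :
    ∫ y in Ioi (0:ℝ), Complex.exp (-(s * y)) * (Real.sin (t * y) : ℂ) =
      ((t / (s ^ 2 + t ^ 2) : ℝ) : ℂ) := by
  have h1 := integral_exp_mul_complex_Ioi (a := -s + t * Complex.I) (by simpa using hs) 0
  have h2 := integral_exp_mul_complex_Ioi (a := -s - t * Complex.I) (by simpa using hs) 0
  have i1 := integrableOn_exp_mul_complex_Ioi (a := -s + t * Complex.I) (by simpa using hs) 0
  have i2 := integrableOn_exp_mul_complex_Ioi (a := -s - t * Complex.I) (by simpa using hs) 0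
  have h3 : (fun y : ℝ => Complex.exp (-(s * y)) * (Real.sin (t * y) : ℂ)) = fun y : ℝ =>
      (Complex.exp ((-s - t * Complex.I) * y) - Complex.exp ((-s + t * Complex.I) * y)) *
        (Complex.I / 2) := by
    funext y
    rw [show (-s - t * Complex.I) * (y:ℂ) = -(s * y) + -((t * y : ℝ) : ℂ) * Complex.I by
        push_cast; ring,
      show (-s + t * Complex.I) * (y:ℂ) = -(s * y) + ((t * y : ℝ) : ℂ) * Complex.I by
        push_cast; ring,
      Complex.exp_add, Complex.exp_add, Complex.ofReal_sin, Complex.sin]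
    ring
  rw [h3, integral_mul_const, integral_sub i2 i1, h1, h2]
  have hp : (-s + t * Complex.I : ℂ) ≠ 0 := by
    intro h; have := congrArg Complex.re h; simp at this; linarith
  have hm : (-s - t * Complex.I : ℂ) ≠ 0 := by
    intro h; have := congrArg Complex.re h; simp at this; linarith
  have hq : ((s:ℂ) ^ 2 + t ^ 2) ≠ 0 := by
    have : s ^ 2 + t ^ 2 ≠ 0 := by positivity
    exact_mod_cast this
  push_cast
  simp only [mul_zero, Complex.exp_zero]
  field_simp
  ring_nf
  simp only [Complex.I_sq]
  ring

/-- the sine-Laplace transform -/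
noncomputable def auxF (q : ℝ) (w : ℂ) (y : ℝ) : ℂ :=
  ∫ t in Ioi (0:ℝ), ((t ^ q : ℝ) : ℂ) * Complex.exp (-(w * t)) * (Real.sin (t * y) : ℂ)

lemma auxF_eq {q : ℝ} (hq : 0 < q) {w : ℂ} (hw : 0 < w.re) (y : ℝ) :
    auxF q w y = (Real.Gamma (q + 1) : ℂ) *
      ((w + Complex.I * y) ^ (-((q + 1 : ℝ) : ℂ)) - (w - Complex.I * y) ^ (-((q + 1 : ℝ) : ℂ))) *
        (Complex.I / 2) := by
  have hp : 0 < (w + Complex.I * y).re := by simpa using hw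
  have hm : 0 < (w - Complex.I * y).re := by simpa using hw
  have h1 := aux_laplace (a := q + 1) (by linarith) hp
  have h2 := aux_laplace (a := q + 1) (by linarith) hm
  have i1 := aux_int (q := q) (by linarith) hp
  have i2 := aux_int (q := q) (by linarith) hm
  rw [add_sub_cancel_right] at h1 h2
  rw [mul_sub, ← h1, ← h2, ← integral_sub i1 i2, ← integral_mul_const, auxF]
  congr 1
  funext t
  rw [show -((w - Complex.I * y) * (t:ℂ)) = -(w * t) + ((t * y : ℝ) : ℂ) * Complex.I by
      push_cast; ring,
    show -((w + Complex.I * y) * (t:ℂ)) = -(w * t) + -((t * y : ℝ) : ℂ) * Complex.I by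
      push_cast; ring,
    Complex.exp_add, Complex.exp_add, Complex.ofReal_sin, Complex.sin]
  ring

lemma auxF_meas {q : ℝ} (hq : 0 < q) {w : ℂ} (hw : 0 < w.re) : Measurable (auxF q w) := by
  rw [funext (auxF_eq hq hw)]
  fun_prop

lemma auxF_small {q : ℝ} (hq : 0 < q) {w : ℂ} (hw : 0 < w.re) {y : ℝ} (hy : 0 < y) :
    ‖auxF q w y‖ ≤ (∫ t in Ioi (0:ℝ), t ^ (q + 1) * Real.exp (-(w.re * t))) * y := by
  rw [← integral_mul_const]
  refine norm_integral_le_of_norm_le ((aux_int_real (by linarith) hw).mul_const y) ?_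
  filter_upwards [self_mem_ae_restrict measurableSet_Ioi] with t ht
  have ht : 0 < t := ht
  rw [norm_mul, aux_norm ht, Complex.norm_real, Real.norm_eq_abs, Real.rpow_add_one ht.ne']
  have h1 : |Real.sin (t * y)| ≤ t * y := by
    have := Real.abs_sin_le_abs (x := t * y)
    rwa [abs_of_pos (mul_pos ht hy)] at this
  have h2 : 0 ≤ t ^ q * Real.exp (-(w.re * t)) := by positivity
  nlinarith [mul_le_mul_of_nonneg_left h1 h2]

lemma aux_cpow_bound {q : ℝ} (hq : 1 ≤ q) (x : ℝ) :
    ‖(1 - Complex.I * x : ℂ) ^ (-((q + 1 : ℝ) : ℂ))‖ ≤ (1 + x ^ 2)⁻¹ := by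
  rw [← Complex.ofReal_neg, Complex.norm_cpow_real]
  have hsq : ‖(1 - Complex.I * x : ℂ)‖ ^ 2 = 1 + x ^ 2 := by
    rw [Complex.sq_norm, Complex.normSq_apply]; simp; ring
  have h1 : 1 ≤ ‖(1 - Complex.I * x : ℂ)‖ := by
    nlinarith [norm_nonneg (1 - Complex.I * x : ℂ), sq_nonneg x]
  rw [← hsq, ← Real.rpow_two, ← Real.rpow_neg (by positivity)]
  exact Real.rpow_le_rpow_of_exponent_le h1 (by linarith)

lemma auxF_int {q : ℝ} (hq : 1 ≤ q) (x : ℝ) {α : ℝ} (h0 : 0 < α) (h2 : α < 2) :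
    IntegrableOn (fun y => auxF q (1 - Complex.I * x) y * ((y ^ (-α) : ℝ) : ℂ)) (Ioi 0) := by
  have hw : 0 < (1 - Complex.I * x : ℂ).re := by simp
  have hm : Measurable (fun y => auxF q (1 - Complex.I * x) y * ((y ^ (-α) : ℝ) : ℂ)) := by
    have := auxF_meas (q := q) (by linarith) hw
    fun_prop
  rw [← Ioc_union_Ioi_eq_Ioi (zero_le_one (α := ℝ)), integrableOn_union]
  constructor
  · have hi : IntegrableOn (fun y : ℝ => y ^ (1 - α)) (Ioc 0 1) :=
      (intervalIntegrable_iff_integrableOn_Ioc_of_le zero_le_one).1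
        (intervalIntegral.intervalIntegrable_rpow' (by linarith))
    refine (hi.const_mul (∫ t in Ioi (0:ℝ), t ^ (q + 1) *
      Real.exp (-((1 - Complex.I * x : ℂ).re * t)))).mono' hm.aestronglyMeasurable ?_
    filter_upwards [self_mem_ae_restrict measurableSet_Ioc] with y hy
    have hy0 : 0 < y := hy.1
    rw [norm_mul, Complex.norm_real, Real.norm_of_nonneg (by positivity)]
    rw [sub_eq_add_neg 1 α, Real.rpow_add hy0, Real.rpow_one, ← mul_assoc]
    exact mul_le_mul_of_nonneg_right (auxF_small (by linarith) hw hy0) (by positivity)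
  · have hi1 : Integrable (fun y : ℝ => (1 + (x - y) ^ 2)⁻¹) :=
      integrable_inv_one_add_sq.comp_sub_left x
    have hi2 : Integrable (fun y : ℝ => (1 + (x + y) ^ 2)⁻¹) :=
      integrable_inv_one_add_sq.comp_add_left x
    refine (((hi1.add hi2).const_mul (Real.Gamma (q + 1) * (1/2))).integrableOn (s := Ioi 1)).mono'
      hm.aestronglyMeasurable ?_
    filter_upwards [self_mem_ae_restrict measurableSet_Ioi] with y hy
    have hy : 1 < y := hy
    have hy0 : 0 < y := by linarith
    rw [norm_mul, Complex.norm_real, Real.norm_of_nonneg (by positivity)]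
    have h3 : y ^ (-α) ≤ 1 := Real.rpow_le_one_of_one_le_of_nonpos hy.le (by linarith)
    refine (mul_le_of_le_one_right (norm_nonneg _) h3).trans ?_
    rw [auxF_eq (by linarith) hw, norm_mul, norm_mul]
    have hG : 0 ≤ Real.Gamma (q + 1) := (Real.Gamma_pos_of_pos (by linarith)).le
    have e1 : (1 - Complex.I * x + Complex.I * y : ℂ) = 1 - Complex.I * ((x - y : ℝ) : ℂ) := by
      push_cast; ring
    have e2 : (1 - Complex.I * x - Complex.I * y : ℂ) = 1 - Complex.I * ((x + y : ℝ) : ℂ) := by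
      push_cast; ring
    rw [e1, e2, Complex.norm_real, Real.norm_of_nonneg hG]
    have e3 : ‖Complex.I / 2‖ = 1 / 2 := by simp
    rw [e3]
    have h4 := (norm_sub_le _ _).trans
      (add_le_add (aux_cpow_bound hq (x - y)) (aux_cpow_bound hq (x + y)))
    have h5 := mul_le_mul_of_nonneg_left h4 hG
    simp only [Pi.add_apply]
    linarith

lemma auxF_inner {q : ℝ} (hq : 0 < q) {w : ℂ} (hw : 0 < w.re) {s : ℝ} (hs : 0 < s) :
    ∫ y in Ioi (0:ℝ), auxF q w y * Complex.exp (-(s * y)) =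
      ∫ t in Ioi (0:ℝ), ((t ^ q : ℝ) : ℂ) * Complex.exp (-(w * t)) *
        ((t / (s ^ 2 + t ^ 2) : ℝ) : ℂ) := by
  have hI : Integrable (Function.uncurry fun y t : ℝ =>
      (((t ^ q : ℝ) : ℂ) * Complex.exp (-(w * t)) * (Real.sin (t * y) : ℂ)) *
        Complex.exp (-(s * y)))
      ((volume.restrict (Ioi (0:ℝ))).prod (volume.restrict (Ioi (0:ℝ)))) := by
    have ie : IntegrableOn (fun y : ℝ => Complex.exp (-(s * y))) (Ioi 0) := by
      have := integrableOn_exp_mul_complex_Ioi (a := -s) (by simpa using hs) 0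
      simpa using this
    refine (Integrable.mul_prod ie (aux_int (q := q) (by linarith) hw)).mono
      (Measurable.aestronglyMeasurable (by unfold Function.uncurry; fun_prop)) ?_
    refine Eventually.of_forall fun z => ?_
    simp only [Function.uncurry]
    rw [norm_mul, norm_mul, norm_mul _ (((z.2 ^ q : ℝ) : ℂ) * _), mul_comm]
    refine mul_le_mul_of_nonneg_left ?_ (norm_nonneg _)
    refine mul_le_of_le_one_right (norm_nonneg _) ?_
    rw [Complex.norm_real]
    exact Real.abs_sin_le_one _
  have h1 : (fun y : ℝ => auxF q w y * Complex.exp (-(s * y))) = fun y : ℝ =>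
      ∫ t in Ioi (0:ℝ), (((t ^ q : ℝ) : ℂ) * Complex.exp (-(w * t)) * (Real.sin (t * y) : ℂ)) *
        Complex.exp (-(s * y)) := by
    funext y
    rw [integral_mul_const, auxF]
  rw [h1, integral_integral_swap hI]
  congr 1
  funext t
  rw [← aux_sin hs t, ← integral_const_mul]
  congr 1
  funext y
  ring

lemma auxF_main {q : ℝ} (hq : 1 ≤ q) (x : ℝ) {α : ℝ} (h0 : 0 < α) (h2 : α < 2) :
    (Real.Gamma α : ℂ) *
      ∫ y in Ioi (0:ℝ), auxF q (1 - Complex.I * x) y * ((y ^ (-α) : ℝ) : ℂ) =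
    ((Real.Gamma (α / 2) * Real.Gamma (1 - α / 2) / 2 : ℝ) : ℂ) *
      ((Real.Gamma (q + α) : ℂ) * (1 - Complex.I * x : ℂ) ^ (-((q + α : ℝ) : ℂ))) := by
  have hw : 0 < (1 - Complex.I * x : ℂ).re := by simp
  set w : ℂ := 1 - Complex.I * x with hwdef
  have H1 := (aux_fub (auxF q w) (fun y s => s ^ (α - 1) * Real.exp (-(y * s)))
    (fun y => y ^ (-α) * Real.Gamma α)
    (auxF_meas (by linarith) hw).aestronglyMeasurable
    (by unfold Function.uncurry; fun_prop)
    (fun y hy s hs => by positivity)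
    (fun y hy => aux_int_real (by linarith) hy)
    (fun y hy => by
      rw [Real.integral_rpow_mul_exp_neg_mul_Ioi h0 hy, one_div, Real.inv_rpow hy.le,
        Real.rpow_neg hy.le])
    (by
      have := (auxF_int hq x h0 h2).mul_const (Real.Gamma α : ℂ)
      refine this.congr (Eventually.of_forall fun y => ?_)
      simp only
      push_cast; ring)).2
  have hsplit : ∀ t : ℝ, 0 < t → ((t ^ (q + α - 1) : ℝ) : ℂ) =
      ((t ^ q : ℝ) : ℂ) * ((t ^ (α - 1) : ℝ) : ℂ) := by
    intro t ht
    rw [← Complex.ofReal_mul, ← Real.rpow_add ht]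
    congr 2; ring
  set C : ℝ := Real.Gamma (α / 2) * Real.Gamma (1 - α / 2) / 2 with hC
  have e : ∀ t : ℝ, 0 < t → (C : ℂ) * (((t ^ (q + α - 1) : ℝ) : ℂ) * Complex.exp (-(w * t))) =
      ((t ^ q : ℝ) : ℂ) * Complex.exp (-(w * t)) * ((C * t ^ (α - 1) : ℝ) : ℂ) := by
    intro t ht
    rw [hsplit t ht]; push_cast; ring
  have H2 := (aux_fub (fun t => ((t ^ q : ℝ) : ℂ) * Complex.exp (-(w * t)))
    (fun t s => s ^ (α - 1) * (t / (s ^ 2 + t ^ 2)))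
    (fun t => C * t ^ (α - 1))
    (aux_meas q w).aestronglyMeasurable
    (by unfold Function.uncurry; fun_prop)
    (fun y hy s hs => by positivity)
    (fun t ht => (aux_K h0 h2 ht).1)
    (fun t ht => (aux_K h0 h2 ht).2)
    (IntegrableOn.congr_fun ((aux_int (q := q + α - 1) (by linarith) hw).const_mul (C : ℂ))
      (fun t ht => e t ht) measurableSet_Ioi)).2
  rw [← setIntegral_congr_fun measurableSet_Ioi (fun t ht => e t ht), integral_const_mul,
    aux_laplace (by linarith) hw] at H2
  rw [← H2, ← integral_const_mul]
  trans ∫ y in Ioi (0:ℝ), auxF q w y * ((y ^ (-α) * Real.Gamma α : ℝ) : ℂ)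
  · congr 1; funext y; push_cast; ring
  rw [← H1]
  refine setIntegral_congr_fun measurableSet_Ioi (fun s hs => ?_)
  have hs : 0 < s := hs
  have h6 := congrArg (fun z : ℂ => ((s ^ (α - 1) : ℝ) : ℂ) * z)
    (auxF_inner (q := q) (by linarith) hw hs)
  beta_reduce at h6
  rw [← integral_const_mul, ← integral_const_mul] at h6
  beta_reduce
  refine Eq.trans ?_ (h6.trans ?_)
  · refine setIntegral_congr_fun measurableSet_Ioi (fun y _ => ?_)
    push_cast
    rw [mul_comm (y:ℂ)]; ring
  · refine setIntegral_congr_fun measurableSet_Ioi (fun y _ => ?_)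
    push_cast
    ring

lemma aux_w_ne (x : ℝ) : (1 - Complex.I * x : ℂ) ≠ 0 := by
  intro h; have := congrArg Complex.re h; simp at this

lemma aux_christov (m : ℕ) (x : ℝ) : christov (-1 - (m : ℤ)) x =
    ∑ k ∈ Finset.range (m + 1),
      (-((m.choose k : ℂ) * (-2) ^ k)) * ((1 - Complex.I * x : ℂ)⁻¹) ^ (k + 1) := by
  have hw := aux_w_ne x
  have hv : (Complex.I * x + 1 : ℂ) ≠ 0 := by
    intro h; have := congrArg Complex.re h; simp at this
  unfold christov
  rw [show (-1 - (m : ℤ)) = -((m + 1 : ℕ) : ℤ) by push_cast; ring,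
    show -((m + 1 : ℕ) : ℤ) + 1 = -((m : ℕ) : ℤ) by push_cast; ring,
    zpow_neg, zpow_neg, zpow_natCast, zpow_natCast]
  have h1 : (Complex.I * x - 1 : ℂ) = -(1 - Complex.I * x) := by ring
  have h2 : (Complex.I * x + 1 : ℂ) = (1 - Complex.I * x) * (-2 * (1 - Complex.I * x : ℂ)⁻¹ + 1) * (-1) := by
    field_simp; ring
  have h3 : (-2 * (1 - Complex.I * x : ℂ)⁻¹ + 1) ^ m = ∑ k ∈ Finset.range (m + 1),
      ((m.choose k : ℂ) * (-2) ^ k) * ((1 - Complex.I * x : ℂ)⁻¹) ^ k := by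
    rw [add_pow]
    refine Finset.sum_congr rfl fun k _ => ?_
    rw [one_pow, mul_pow]; ring
  have h4 : (∑ k ∈ Finset.range (m + 1),
      (-((m.choose k : ℂ) * (-2) ^ k)) * ((1 - Complex.I * x : ℂ)⁻¹) ^ (k + 1)) =
      -(1 - Complex.I * x : ℂ)⁻¹ * (-2 * (1 - Complex.I * x : ℂ)⁻¹ + 1) ^ m := by
    rw [h3, Finset.mul_sum]
    refine Finset.sum_congr rfl fun k _ => ?_
    ring
  rw [h4, div_inv_eq_mul, h2, h1]
  generalize (1 - Complex.I * x : ℂ) = w at *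
  rw [mul_pow, mul_pow, neg_pow w, mul_inv, pow_succ w, mul_inv, pow_succ (-1 : ℂ), mul_inv,
    ← inv_pow (-1 : ℂ)]
  have h5 : (w ^ m)⁻¹ * w ^ m = 1 := inv_mul_cancel₀ (pow_ne_zero _ hw)
  have h6 : ((-1 : ℂ)⁻¹) ^ m * (-1) ^ m = 1 := by rw [← mul_pow]; norm_num
  have h7 : (-1 : ℂ)⁻¹ = -1 := by norm_num
  calc _ = (((-1 : ℂ)⁻¹) ^ m * (-1) ^ m) * ((w ^ m)⁻¹ * w ^ m) * ((-1 : ℂ)⁻¹ * w⁻¹ * (-2 * w⁻¹ + 1) ^ m) := by ring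
    _ = _ := by rw [h5, h6, h7]; ring

lemma aux_christov' (m : ℕ) (x : ℝ) : christov' (-1 - (m : ℤ)) x =
    ∑ k ∈ Finset.range (m + 1),
      (-((m.choose k : ℂ) * (-2) ^ k)) *
        (((k : ℂ) + 1) * Complex.I * ((1 - Complex.I * x : ℂ)⁻¹) ^ (k + 2)) := by
  unfold christov'
  rw [funext (aux_christov m)]
  apply HasDerivAt.deriv
  apply HasDerivAt.fun_sum
  intro k _
  apply HasDerivAt.const_mul
  have h0 : HasDerivAt (fun x : ℝ => (1 - Complex.I * x : ℂ)) (-Complex.I) x := by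
    have := ((Complex.ofRealCLM.hasDerivAt (x := x)).const_mul Complex.I).const_sub 1
    simpa using this
  have h1 := (h0.fun_inv (aux_w_ne x)).fun_pow (k + 1)
  convert h1 using 1
  have := aux_w_ne x
  simp only [Nat.add_sub_cancel]
  push_cast
  rw [neg_neg, div_eq_mul_inv, ← inv_pow]
  ring

lemma aux_coef (k : ℕ) (x y : ℝ) :
    ((k : ℂ) + 1) * Complex.I * ((1 - Complex.I * ((x - y : ℝ) : ℂ) : ℂ)⁻¹) ^ (k + 2) -
      ((k : ℂ) + 1) * Complex.I * ((1 - Complex.I * ((x + y : ℝ) : ℂ) : ℂ)⁻¹) ^ (k + 2) =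
    2 / (k.factorial : ℂ) * auxF ((k : ℝ) + 1) (1 - Complex.I * x) y := by
  rw [auxF_eq (by positivity) (by simp)]
  have e1 : (1 - Complex.I * x + Complex.I * y : ℂ) = 1 - Complex.I * ((x - y : ℝ) : ℂ) := by
    push_cast; ring
  have e2 : (1 - Complex.I * x - Complex.I * y : ℂ) = 1 - Complex.I * ((x + y : ℝ) : ℂ) := by
    push_cast; ring
  have e3 : ∀ z : ℂ, z ^ (-(((k : ℝ) + 1 + 1 : ℝ) : ℂ)) = (z⁻¹) ^ (k + 2) := by
    intro z
    rw [show (((k : ℝ) + 1 + 1 : ℝ) : ℂ) = ((k + 2 : ℕ) : ℂ) by push_cast; ring,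
      Complex.cpow_neg, Complex.cpow_natCast, inv_pow]
  have e4 : Real.Gamma ((k : ℝ) + 1 + 1) = ((k : ℝ) + 1) * k.factorial := by
    have := Real.Gamma_nat_eq_factorial (k + 1)
    push_cast at this
    rw [this, Nat.factorial_succ]; push_cast; ring
  rw [e1, e2, e3, e3, e4]
  have : (k.factorial : ℂ) ≠ 0 := by exact_mod_cast k.factorial_ne_zero
  push_cast
  field_simp

lemma aux_const {α : ℝ} (h0 : 0 < α) (h2 : α < 2) :
    cFrac α / α * (Real.Gamma (α / 2) * Real.Gamma (1 - α / 2) / 2) = Real.Gamma α / 2 := by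
  unfold cFrac
  have hd := Real.Gamma_mul_Gamma_add_half (α / 2)
  rw [show 2 * (α / 2) = α by ring, add_comm (α / 2)] at hd
  have h3 : Real.Gamma (1 - α / 2) ≠ 0 := (Real.Gamma_pos_of_pos (by linarith)).ne'
  have h4 : √Real.pi ≠ 0 := by positivity
  have h5 : (2:ℝ) ^ (α - 1) * 2 ^ (1 - α) = 1 := by
    rw [← Real.rpow_add two_pos]; simp
  have : α * 2 ^ (α - 1) * Real.Gamma (1 / 2 + α / 2) / (√Real.pi * Real.Gamma (1 - α / 2)) / α *
      (Real.Gamma (α / 2) * Real.Gamma (1 - α / 2) / 2) =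
      2 ^ (α - 1) * (Real.Gamma (α / 2) * Real.Gamma (1 / 2 + α / 2)) / √Real.pi / 2 := by
    generalize Real.Gamma (1 - α / 2) = G at *
    field_simp
  rw [this, hd]
  calc _ = ((2:ℝ) ^ (α - 1) * 2 ^ (1 - α)) * Real.Gamma α * (√Real.pi / √Real.pi) / 2 := by ring
    _ = _ := by rw [h5, div_self h4]; ring

lemma aux_gbinom_nat (m k : ℕ) : gbinom (m : ℂ) k = (m.choose k : ℂ) := by
  unfold gbinom
  have : (k.factorial : ℂ) ≠ 0 := by exact_mod_cast k.factorial_ne_zero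
  rw [div_eq_iff this]
  have h1 : ∏ i ∈ Finset.range k, ((m : ℂ) - (i : ℂ)) = (m.descFactorial k : ℂ) := by
    induction k with
    | zero => simp
    | succ k ih =>
      rw [Finset.prod_range_succ, ih (by exact_mod_cast k.factorial_ne_zero), Nat.descFactorial_succ]
      by_cases h : k ≤ m
      · push_cast [Nat.cast_sub h]; ring
      · rw [Nat.descFactorial_of_lt (by omega)]; simp
  rw [h1, Nat.descFactorial_eq_factorial_mul_choose]
  push_cast; ring

lemma aux_gbinom_neg {α : ℝ} (h0 : 0 < α) (k : ℕ) :
    (Real.Gamma (1 + α) : ℂ) * gbinom (-1 - (α : ℂ)) k =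
      (-1) ^ k * (Real.Gamma ((k : ℝ) + 1 + α) : ℂ) / (k.factorial : ℂ) := by
  unfold gbinom
  rw [← mul_div_assoc]
  congr 1
  induction k with
  | zero => simp
  | succ k ih =>
    rw [Finset.prod_range_succ, ← mul_assoc, ih]
    have := Real.Gamma_add_one (s := (k : ℝ) + 1 + α) (by positivity)
    rw [show ((k + 1 : ℕ) : ℝ) + 1 + α = (k : ℝ) + 1 + α + 1 by push_cast; ring, this]
    push_cast; ring

lemma aux_piece {α : ℝ} (h0 : 0 < α) (h2 : α < 2) (x : ℝ) (k : ℕ) :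
    ((cFrac α / α : ℝ) : ℂ) *
      ∫ y in Ioi (0:ℝ), auxF ((k : ℝ) + 1) (1 - Complex.I * x) y * ((y ^ (-α) : ℝ) : ℂ) =
    (Real.Gamma ((k : ℝ) + 1 + α) : ℂ) / 2 *
      (1 / (1 - Complex.I * x : ℂ) ^ ((1 : ℂ) + (α : ℂ)) * (1 / (1 - Complex.I * x : ℂ)) ^ k) := by
  have h := auxF_main (q := (k : ℝ) + 1) (by linarith [Nat.cast_nonneg (α := ℝ) k]) x h0 h2
  have hG : (Real.Gamma α : ℂ) ≠ 0 := by exact_mod_cast (Real.Gamma_pos_of_pos h0).ne'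
  have hc := congrArg (fun r : ℝ => (r : ℂ)) (aux_const h0 h2)
  beta_reduce at hc
  rw [Complex.ofReal_mul] at hc
  have hp : (1 - Complex.I * x : ℂ) ^ (-(((k : ℝ) + 1 + α : ℝ) : ℂ)) =
      1 / (1 - Complex.I * x : ℂ) ^ ((1 : ℂ) + (α : ℂ)) * (1 / (1 - Complex.I * x : ℂ)) ^ k := by
    rw [show (((k : ℝ) + 1 + α : ℝ) : ℂ) = (1 + α) + (k : ℕ) by push_cast; ring, Complex.cpow_neg,
      Complex.cpow_add _ _ (aux_w_ne x), Complex.cpow_natCast]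
    simp [mul_comm]
  rw [← hp]
  apply mul_left_cancel₀ hG
  rw [mul_left_comm, h, ← mul_assoc, hc]
  push_cast; ring

end Aux

theorem fracLap_christov_neg (α : ℝ) (hα : α ∈ Set.Ioo (0 : ℝ) 2) (m : ℕ) (x : ℝ) :
    IntegrableOn (fun y : ℝ =>
        (christov' (-1 - (m : ℤ)) (x - y) - christov' (-1 - (m : ℤ)) (x + y)) *
          ((y ^ (-α) : ℝ) : ℂ)) (Set.Ioi 0) ∧
    ((cFrac α / α : ℝ) : ℂ) *
        ∫ y in Set.Ioi (0 : ℝ),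
          (christov' (-1 - (m : ℤ)) (x - y) - christov' (-1 - (m : ℤ)) (x + y)) *
            ((y ^ (-α) : ℝ) : ℂ) =
      -((Real.Gamma (1 + α) : ℂ) / (1 - Complex.I * (x : ℂ)) ^ ((1 : ℂ) + (α : ℂ))) *
        ∑ k ∈ Finset.range (m + 1),
          gbinom (m : ℂ) k * gbinom (-1 - (α : ℂ)) k *
            (2 / (1 - Complex.I * (x : ℂ))) ^ k := by
  obtain ⟨h0, h2⟩ := hα
  have hfun : (fun y : ℝ =>
        (christov' (-1 - (m : ℤ)) (x - y) - christov' (-1 - (m : ℤ)) (x + y)) *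
          ((y ^ (-α) : ℝ) : ℂ)) = fun y : ℝ => ∑ k ∈ Finset.range (m + 1),
      (-((m.choose k : ℂ) * (-2) ^ k) * (2 / (k.factorial : ℂ))) *
        (auxF ((k : ℝ) + 1) (1 - Complex.I * x) y * ((y ^ (-α) : ℝ) : ℂ)) := by
    funext y
    rw [aux_christov', aux_christov', ← Finset.sum_sub_distrib, Finset.sum_mul]
    refine Finset.sum_congr rfl fun k _ => ?_
    rw [← mul_sub, aux_coef]
    ring
  have hint : ∀ k ∈ Finset.range (m + 1), IntegrableOn (fun y : ℝ =>
      (-((m.choose k : ℂ) * (-2) ^ k) * (2 / (k.factorial : ℂ))) *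
        (auxF ((k : ℝ) + 1) (1 - Complex.I * x) y * ((y ^ (-α) : ℝ) : ℂ))) (Set.Ioi 0) := by
    intro k _
    exact (auxF_int (q := (k : ℝ) + 1) (by linarith [Nat.cast_nonneg (α := ℝ) k]) x h0 h2).const_mul _
  rw [hfun]
  refine ⟨integrable_finsetSum _ hint, ?_⟩
  rw [integral_finsetSum _ hint, Finset.mul_sum, Finset.mul_sum]
  refine Finset.sum_congr rfl fun k _ => ?_
  rw [integral_const_mul, mul_left_comm, aux_piece h0 h2, aux_gbinom_nat]
  have hg := aux_gbinom_neg h0 k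
  have hs : (-2 : ℂ) ^ k = (-1) ^ k * 2 ^ k := by rw [← mul_pow]; norm_num
  rw [hs, div_pow, div_pow, one_pow]
  calc _ = -((m.choose k : ℂ) * 2 ^ k) *
        ((-1) ^ k * (Real.Gamma ((k : ℝ) + 1 + α) : ℂ) / (k.factorial : ℂ)) *
        (1 / (1 - Complex.I * x : ℂ) ^ ((1 : ℂ) + (α : ℂ)) * (1 / (1 - Complex.I * x : ℂ) ^ k)) := by
        ring
    _ = _ := by rw [← hg]; ring
end

section
/- Let α ∈ (0,2), n ∈ ℕ with n ≥ 1, and x ∈ ℝ. Then the following two finite-sum expressions are equal: −(2·Γ(1+α)/(ix+1)^(1+α)) · ∑_{k=0}^{n−1} C(n,k+1)·C(−1−α,k)·(2/(ix+1))^k = −(2n·Γ(1+α)/(ix+1)^(n+α)) · ∑_{l=0}^{n−1} C(n−1,l)·(ix)^(n−1−l)·G_α(l). (That is, the closed-form fractional Laplacian of λ_n can be expanded as a polynomial in ix times (ix+1)^(−n−α).) -/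
open MeasureTheory Finset

theorem gbinom_natCast (n k : ℕ) : gbinom (n : ℂ) k = (n.choose k : ℂ) := by
  unfold gbinom
  have hk : (k.factorial : ℂ) ≠ 0 := by exact_mod_cast k.factorial_ne_zero
  rw [div_eq_iff hk]
  have h : ∀ j : ℕ, ∏ i ∈ Finset.range j, ((n : ℂ) - (i : ℂ)) = (n.descFactorial j : ℂ) := by
    intro j
    induction j with
    | zero => simp
    | succ j ih =>
      rw [Finset.prod_range_succ, ih, Nat.descFactorial_succ]
      rcases le_or_gt j n with hj | hj
      · push_cast [Nat.cast_sub hj]; ring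
      · rw [Nat.descFactorial_of_lt hj]; simp
  rw [h k, Nat.descFactorial_eq_factorial_mul_choose]
  push_cast; ring

theorem choose_aux (m l k : ℕ) (hkl : k ≤ l) (hlm : l ≤ m) :
    ((m : ℂ) + 1) * (m.choose l : ℂ) * (1 / ((l : ℂ) + 1)) * ((l + 1).choose (k + 1) : ℂ) =
      ((m + 1).choose (k + 1) : ℂ) * ((m - k).choose (l - k) : ℂ) := by
  have h1 : ((m : ℂ) + 1) * (m.choose l : ℂ) = ((m + 1).choose (l + 1) : ℂ) * ((l : ℂ) + 1) := by
    exact_mod_cast Nat.add_one_mul_choose_eq m l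
  have h2 : ((m + 1).choose (l + 1) : ℂ) * ((l + 1).choose (k + 1) : ℂ) =
      ((m + 1).choose (k + 1) : ℂ) * ((m - k).choose (l - k) : ℂ) := by
    have := Nat.choose_mul (n := m + 1) (k := l + 1) (s := k + 1) (by omega)
    simp only [Nat.add_sub_add_right] at this
    exact_mod_cast this
  have h3 : (l : ℂ) + 1 ≠ 0 := by exact_mod_cast l.succ_ne_zero
  rw [h1, ← h2]
  field_simp

theorem binom_tail (m k : ℕ) (hk : k ≤ m) (y : ℂ) :
    ∑ l ∈ Finset.Ico k (m + 1), ((m - k).choose (l - k) : ℂ) * y ^ (m - l) =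
      (y + 1) ^ (m - k) := by
  rw [Finset.sum_Ico_eq_sum_range, add_comm y 1, add_pow, show m + 1 - k = m - k + 1 by omega]
  refine Finset.sum_congr rfl fun j _ => ?_
  rw [Nat.add_sub_cancel_left, Nat.sub_sub]
  ring

theorem poly_identity (b : ℕ → ℂ) (m : ℕ) (y : ℂ) :
    ∑ k ∈ Finset.range (m + 1), ((m + 1).choose (k + 1) : ℂ) * b k * (y + 1) ^ (m - k) =
      ((m : ℂ) + 1) * ∑ l ∈ Finset.range (m + 1), (m.choose l : ℂ) * y ^ (m - l) *
        ((1 / ((l : ℂ) + 1)) * ∑ k ∈ Finset.range (l + 1),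
          ((l + 1).choose (k + 1) : ℂ) * b k) := by
  have hR : ((m : ℂ) + 1) * ∑ l ∈ Finset.range (m + 1), (m.choose l : ℂ) * y ^ (m - l) *
        ((1 / ((l : ℂ) + 1)) * ∑ k ∈ Finset.range (l + 1),
          ((l + 1).choose (k + 1) : ℂ) * b k) =
      ∑ l ∈ Finset.range (m + 1), ∑ k ∈ Finset.range (l + 1),
        ((m + 1).choose (k + 1) : ℂ) * b k * (((m - k).choose (l - k) : ℂ) * y ^ (m - l)) := by
    rw [Finset.mul_sum]
    refine Finset.sum_congr rfl fun l hl => ?_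
    rw [← mul_assoc, ← mul_assoc, Finset.mul_sum]
    refine Finset.sum_congr rfl fun k hk => ?_
    rw [Finset.mem_range] at hl hk
    have := choose_aux m l k (by omega) (by omega)
    linear_combination (b k * y ^ (m - l)) * this
  rw [hR, Finset.sum_comm' (t' := Finset.range (m + 1)) (s' := fun k => Finset.Ico k (m + 1))]
  · refine Finset.sum_congr rfl fun k hk => ?_
    rw [Finset.mem_range] at hk
    rw [← Finset.mul_sum, binom_tail m k (by omega)]
  · intro a c
    simp only [Finset.mem_range, Finset.mem_Ico]
    omega

theorem fracLap_higgins_expansion (α : ℝ) (hα : α ∈ Set.Ioo (0 : ℝ) 2) (n : ℕ) (hn : 1 ≤ n)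
    (x : ℝ) :
    -(2 * (Real.Gamma (1 + α) : ℂ) / (Complex.I * (x : ℂ) + 1) ^ ((1 : ℂ) + (α : ℂ))) *
        ∑ k ∈ Finset.range n,
          gbinom (n : ℂ) (k + 1) * gbinom (-1 - (α : ℂ)) k *
            (2 / (Complex.I * (x : ℂ) + 1)) ^ k =
      -(2 * (n : ℂ) * (Real.Gamma (1 + α) : ℂ) /
            (Complex.I * (x : ℂ) + 1) ^ ((n : ℂ) + (α : ℂ))) *
        ∑ l ∈ Finset.range n,
          gbinom ((n : ℂ) - 1) l * (Complex.I * (x : ℂ)) ^ (n - 1 - l) * Gc α l := by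
  obtain ⟨m, rfl⟩ : ∃ m, n = m + 1 := ⟨n - 1, by omega⟩
  have hw : Complex.I * (x : ℂ) + 1 ≠ 0 := by
    intro h
    have := congrArg Complex.re h
    simp at this
  have key := poly_identity (fun k => gbinom (-1 - (α : ℂ)) k * 2 ^ k) m (Complex.I * (x : ℂ))
  have hm1 : ((m + 1 : ℕ) : ℂ) - 1 = (m : ℂ) := by push_cast; ring
  have hG : ∀ l, Gc α l = (1 / ((l : ℂ) + 1)) * ∑ k ∈ Finset.range (l + 1),
          ((l + 1).choose (k + 1) : ℂ) * (gbinom (-1 - (α : ℂ)) k * 2 ^ k) := by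
    intro l
    unfold Gc
    congr 1
    refine Finset.sum_congr rfl fun k _ => ?_
    rw [← gbinom_natCast]
    push_cast; ring
  have hpow : (Complex.I * (x : ℂ) + 1) ^ (((m + 1 : ℕ) : ℂ) + (α : ℂ)) =
      (Complex.I * (x : ℂ) + 1) ^ ((1 : ℂ) + (α : ℂ)) * (Complex.I * (x : ℂ) + 1) ^ m := by
    rw [← Complex.cpow_natCast, ← Complex.cpow_add _ _ hw]
    congr 1
    push_cast; ring
  have hw' : (Complex.I * (x : ℂ) + 1) ^ ((1 : ℂ) + (α : ℂ)) ≠ 0 := by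
    rw [Complex.cpow_def_of_ne_zero hw]; exact Complex.exp_ne_zero _
  have hL : (Complex.I * (x : ℂ) + 1) ^ m * ∑ k ∈ Finset.range (m + 1),
          gbinom ((m + 1 : ℕ) : ℂ) (k + 1) * gbinom (-1 - (α : ℂ)) k *
            (2 / (Complex.I * (x : ℂ) + 1)) ^ k =
      ((m : ℂ) + 1) * ∑ l ∈ Finset.range (m + 1),
          gbinom (((m + 1 : ℕ) : ℂ) - 1) l * (Complex.I * (x : ℂ)) ^ (m + 1 - 1 - l) * Gc α l := by
    simp only [hm1, hG, gbinom_natCast, Nat.add_sub_cancel]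
    rw [← key, Finset.mul_sum]
    refine Finset.sum_congr rfl fun k hk => ?_
    rw [Finset.mem_range] at hk
    rw [div_pow, ← pow_sub_mul_pow (Complex.I * (x : ℂ) + 1) (show k ≤ m by omega)]
    field_simp
  rw [hpow]
  generalize (Complex.I * (x : ℂ) + 1) ^ ((1 : ℂ) + (α : ℂ)) = W at *
  have hwm := pow_ne_zero m hw
  generalize (∑ k ∈ Finset.range (m + 1),
          gbinom ((m + 1 : ℕ) : ℂ) (k + 1) * gbinom (-1 - (α : ℂ)) k *
            (2 / (Complex.I * (x : ℂ) + 1)) ^ k) = S at *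
  generalize (∑ l ∈ Finset.range (m + 1),
          gbinom (((m + 1 : ℕ) : ℂ) - 1) l * (Complex.I * (x : ℂ)) ^ (m + 1 - 1 - l) * Gc α l) = T
    at *
  generalize (Complex.I * (x : ℂ) + 1) ^ m = V at *
  push_cast
  rw [neg_mul, neg_mul, neg_inj, div_mul_eq_mul_div, div_mul_eq_mul_div,
    div_eq_div_iff hw' (mul_ne_zero hw' hwm)]
  linear_combination (2 * (Real.Gamma (1 + α) : ℂ) * W) * hL
end

section
/- Let α ∈ (0,2), n ∈ ℕ with n ≥ 1, and x ∈ ℝ. Define CH_{2n}(x) = Re λ_n(x) (the cosine-like Higgins function). Then y ↦ (CH_{2n}'(x−y) − CH_{2n}'(x+y))·y^(−α) is absolutely integrable on (0,∞), and (c_α/α)·∫₀^∞ (CH_{2n}'(x−y) − CH_{2n}'(x+y))·y^(−α) dy = −(2n·Γ(1+α)/(1+x²)^((n+α)/2))·sin((n+α)·arccot(x) − πα/2)·∑_{l≥0, 2l≤n−1} (−1)^l·C(n−1,2l)·x^(n−1−2l)·G_α(2l) + (2n·Γ(1+α)/(1+x²)^((n+α)/2))·cos((n+α)·arccot(x) −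 πα/2)·∑_{l≥0, 2l+1≤n−1} (−1)^l·C(n−1,2l+1)·x^(n−2−2l)·G_α(2l+1). -/
open MeasureTheory Finset

/-- The cosine-like Higgins function `CH_{2n}(x) = Re λ_n(x)`. -/
noncomputable def CH (n : ℕ) (x : ℝ) : ℝ := (higgins (n : ℤ) x).re

/-- The derivative `CH_{2n}'`. -/
noncomputable def CH' (n : ℕ) (x : ℝ) : ℝ := deriv (CH n) x

/-- difference kernel -/
noncomputable def DD (m : ℕ) (a : ℂ) (y : ℝ) : ℂ :=
  ((a - Complex.I * y)⁻¹) ^ (m + 1) - ((a + Complex.I * y)⁻¹) ^ (m + 1)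

lemma low_bound {δ M y : ℝ} (hδ : 0 < δ) (hM : 0 ≤ M) {a : ℂ} (h1 : δ ≤ a.re) (h2 : ‖a‖ ≤ M)
    (hy : 0 < y) (w : ℂ) (hw : w = Complex.I * y ∨ w = -(Complex.I * y)) :
    δ / (1 + M + δ) * (1 + y) ≤ ‖a + w‖ := by
  have hre : w.re = 0 := by rcases hw with rfl | rfl <;> simp
  have hn : ‖w‖ = y := by rcases hw with rfl | rfl <;> simp [abs_of_pos hy]
  have e1 : δ ≤ ‖a + w‖ := by
    refine le_trans ?_ (Complex.re_le_norm _)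
    simp [hre, h1]
  have e2 : y - M ≤ ‖a + w‖ := by
    have := norm_sub_le (a + w) a
    rw [add_sub_cancel_left, hn] at this
    linarith
  rw [div_mul_eq_mul_div, div_le_iff₀ (by positivity)]
  nlinarith

lemma pow_sub_bound (p q : ℂ) (R : ℝ) (hp : ‖p‖ ≤ R) (hq : ‖q‖ ≤ R) (m : ℕ) :
    ‖p ^ (m + 1) - q ^ (m + 1)‖ ≤ (m + 1) * R ^ m * ‖p - q‖ := by
  have hR : 0 ≤ R := (norm_nonneg p).trans hp
  induction m with
  | zero => simp
  | succ m ih =>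
    have : p ^ (m + 1 + 1) - q ^ (m + 1 + 1) = p * (p ^ (m + 1) - q ^ (m + 1)) + (p - q) * q ^ (m + 1) := by ring
    rw [this]
    refine (norm_add_le _ _).trans ?_
    rw [norm_mul, norm_mul, norm_pow]
    have h1 : ‖p‖ * ‖p ^ (m + 1) - q ^ (m + 1)‖ ≤ R * ((m + 1) * R ^ m * ‖p - q‖) := by gcongr
    have h2 : ‖p - q‖ * ‖q‖ ^ (m + 1) ≤ ‖p - q‖ * R ^ (m + 1) := by gcongr
    push_cast
    calc _ ≤ _ := add_le_add h1 h2
      _ = _ := by ring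

lemma add_ne {a w : ℂ} {y : ℝ} (h1 : 0 < a.re) (hw : w = Complex.I * y ∨ w = -(Complex.I * y)) :
    a + w ≠ 0 := by
  intro h
  have hre : w.re = 0 := by rcases hw with rfl | rfl <;> simp
  have := congrArg Complex.re h
  simp [hre] at this
  linarith

lemma DD_bound (m : ℕ) {δ M : ℝ} (hδ : 0 < δ) (hM : 0 ≤ M) : ∃ K : ℝ, 0 ≤ K ∧
    ∀ a : ℂ, δ ≤ a.re → ‖a‖ ≤ M → ∀ y : ℝ, 0 < y → ‖DD m a y‖ ≤ K * (y * ((1 + y) ^ 2)⁻¹) := by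
  set c := δ / (1 + M + δ) with hc
  have hc0 : 0 < c := by positivity
  refine ⟨(m + 1) * (c⁻¹) ^ m * (2 * (c⁻¹) ^ 2), by positivity, ?_⟩
  intro a h1 h2 y hy
  have b1 := low_bound hδ hM h1 h2 hy _ (Or.inl rfl)
  have b2 := low_bound hδ hM h1 h2 hy _ (Or.inr rfl)
  have n1 := add_ne (y := y) (hδ.trans_le h1) (Or.inl rfl)
  have n2 := add_ne (y := y) (hδ.trans_le h1) (Or.inr rfl)
  rw [← sub_eq_add_neg] at b2 n2
  rw [← hc] at b1 b2
  have hcy : 0 < c * (1 + y) := by positivity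
  have i1 : ‖(a + Complex.I * y)⁻¹‖ ≤ (c * (1 + y))⁻¹ := by
    rw [norm_inv]; exact inv_anti₀ hcy b1
  have i2 : ‖(a - Complex.I * y)⁻¹‖ ≤ (c * (1 + y))⁻¹ := by
    rw [norm_inv]; exact inv_anti₀ hcy b2
  have hR : (c * (1 + y))⁻¹ ≤ c⁻¹ := inv_anti₀ hc0 (by nlinarith)
  have hd : (a - Complex.I * y)⁻¹ - (a + Complex.I * y)⁻¹ =
      2 * Complex.I * y * (a - Complex.I * y)⁻¹ * (a + Complex.I * y)⁻¹ := by
    field_simp; ring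
  have hdn : ‖(a - Complex.I * y)⁻¹ - (a + Complex.I * y)⁻¹‖ ≤ 2 * y * (c * (1 + y))⁻¹ * (c * (1 + y))⁻¹ := by
    rw [hd, norm_mul, norm_mul]
    have : ‖2 * Complex.I * (y : ℂ)‖ = 2 * y := by simp [abs_of_pos hy]
    rw [this]
    gcongr
  unfold DD
  refine (pow_sub_bound _ _ c⁻¹ (i2.trans hR) (i1.trans hR) m).trans ?_
  calc _ ≤ (m + 1) * (c⁻¹) ^ m * (2 * y * (c * (1 + y))⁻¹ * (c * (1 + y))⁻¹) := by gcongr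
    _ = _ := by rw [mul_inv, ← inv_pow (1 + y)]; ring

lemma bound_integrable {α : ℝ} (hα : α ∈ Set.Ioo (0 : ℝ) 2) :
    IntegrableOn (fun y : ℝ => y * ((1 + y) ^ 2)⁻¹ * y ^ (-α)) (Set.Ioi 0) := by
  obtain ⟨h0, h2⟩ := hα
  have hmeas : Measurable (fun y : ℝ => y * ((1 + y) ^ 2)⁻¹ * y ^ (-α)) := by fun_prop
  rw [← Set.Ioc_union_Ioi_eq_Ioi (zero_le_one' ℝ), integrableOn_union]
  constructor
  · have := (intervalIntegral.intervalIntegrable_rpow' (a := 0) (b := 1) (r := 1 - α) (by linarith))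
    rw [intervalIntegrable_iff_integrableOn_Ioc_of_le zero_le_one] at this
    refine Integrable.mono' this hmeas.aestronglyMeasurable ?_
    refine (ae_restrict_iff' measurableSet_Ioc).2 (Filter.Eventually.of_forall fun y hy => ?_)
    have hy0 := hy.1
    rw [Real.norm_of_nonneg (by positivity), sub_eq_add_neg, Real.rpow_add hy0, Real.rpow_one]
    gcongr
    apply mul_le_of_le_one_right hy0.le
    apply inv_le_one_of_one_le₀
    nlinarith
  · refine Integrable.mono' (integrableOn_Ioi_rpow_of_lt (a := -1-α) (by linarith) one_pos) hmeas.aestronglyMeasurable ?_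
    refine (ae_restrict_iff' measurableSet_Ioi).2 (Filter.Eventually.of_forall fun y hy => ?_)
    have hy0 : 0 < y := one_pos.trans hy
    rw [Real.norm_of_nonneg (by positivity), sub_eq_add_neg, Real.rpow_add hy0, Real.rpow_neg_one]
    gcongr
    rw [← div_eq_mul_inv, div_le_iff₀ (by positivity)]
    field_simp
    nlinarith

lemma DD_meas (m : ℕ) (a : ℂ) (α : ℝ) : Measurable (fun y : ℝ => DD m a y * ((y ^ (-α) : ℝ) : ℂ)) := by
  unfold DD; fun_prop

lemma DD_integrable {α : ℝ} (hα : α ∈ Set.Ioo (0 : ℝ) 2) (m : ℕ) {a : ℂ} (ha : 0 < a.re) :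
    IntegrableOn (fun y : ℝ => DD m a y * ((y ^ (-α) : ℝ) : ℂ)) (Set.Ioi 0) := by
  obtain ⟨K, hK, hb⟩ := DD_bound m ha (norm_nonneg a)
  refine Integrable.mono' ((bound_integrable hα).const_mul K) (DD_meas m a α).aestronglyMeasurable ?_
  refine (ae_restrict_iff' measurableSet_Ioi).2 (Filter.Eventually.of_forall fun y hy => ?_)
  have hy0 : 0 < y := hy
  rw [norm_mul, Complex.norm_real, Real.norm_of_nonneg (by positivity), ← mul_assoc]
  gcongr
  exact hb a le_rfl le_rfl y hy

noncomputable def FF (α : ℝ) (m : ℕ) (a : ℂ) : ℂ :=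
  ∫ y in Set.Ioi (0 : ℝ), DD m a y * ((y ^ (-α) : ℝ) : ℂ)

lemma DD_deriv (m : ℕ) {a : ℂ} (ha : 0 < a.re) (y : ℝ) :
    HasDerivAt (fun a => DD m a y) (-(m + 1) * DD (m + 1) a y) a := by
  have n1 := add_ne (y := y) ha (Or.inl rfl)
  have n2 := add_ne (y := y) ha (Or.inr rfl)
  rw [← sub_eq_add_neg] at n2
  unfold DD
  have d1 := ((((hasDerivAt_id a).sub_const (Complex.I * y)).inv n2).pow (m + 1))
  have d2 := ((((hasDerivAt_id a).add_const (Complex.I * y)).inv n1).pow (m + 1))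
  refine (d1.sub d2).congr_deriv ?_
  simp only [id, Pi.inv_apply]
  push_cast
  simp only [div_eq_mul_inv, ← inv_pow]
  ring

lemma FF_deriv {α : ℝ} (hα : α ∈ Set.Ioo (0 : ℝ) 2) (m : ℕ) {a : ℂ} (ha : 0 < a.re) :
    HasDerivAt (FF α m) (-(m + 1) * FF α (m + 1) a) a := by
  obtain ⟨K, hK, hb⟩ := DD_bound (m + 1) (half_pos ha) (by positivity : 0 ≤ ‖a‖ + 1)
  have hs : {z : ℂ | a.re / 2 < z.re} ∩ {z : ℂ | ‖z‖ < ‖a‖ + 1} ∈ nhds a := by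
    apply IsOpen.mem_nhds
    · exact (isOpen_lt continuous_const Complex.continuous_re).inter (isOpen_lt continuous_norm continuous_const)
    · constructor
      · show a.re / 2 < a.re
        linarith
      · show ‖a‖ < ‖a‖ + 1
        linarith
  have := (hasDerivAt_integral_of_dominated_loc_of_deriv_le (μ := volume.restrict (Set.Ioi (0:ℝ)))
    (F := fun a y => DD m a y * ((y ^ (-α) : ℝ) : ℂ))
    (F' := fun a y => (-(m + 1) * DD (m + 1) a y) * ((y ^ (-α) : ℝ) : ℂ))
    (bound := fun y => (m + 1) * K * (y * ((1 + y) ^ 2)⁻¹ * y ^ (-α))) hs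
    (Filter.Eventually.of_forall fun a => (DD_meas m a α).aestronglyMeasurable)
    (DD_integrable hα m ha) ?_ ?_ ((bound_integrable hα).const_mul _) ?_).2
  · refine this.congr_deriv ?_
    unfold FF
    rw [← integral_const_mul]
    simp only [mul_assoc]
  · simp only [mul_assoc]
    exact ((DD_meas (m + 1) a α).const_mul _).aestronglyMeasurable
  · refine (ae_restrict_iff' measurableSet_Ioi).2 (Filter.Eventually.of_forall fun y hy z hz => ?_)
    have hy0 : 0 < y := hy
    rw [norm_mul, norm_mul, Complex.norm_real, Real.norm_of_nonneg (by positivity : 0 ≤ y ^ (-α))]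
    have : ‖(-(m + 1) : ℂ)‖ = m + 1 := by
      rw [norm_neg]; norm_cast
    rw [this, ← mul_assoc, mul_assoc (m + 1 : ℝ) K]
    gcongr
    exact hb z (le_of_lt hz.1) (le_of_lt hz.2) y hy
  · refine Filter.Eventually.of_forall fun y z hz => ?_
    exact (DD_deriv m ((half_pos ha).trans hz.1) y).mul_const _

lemma DD_zero_real {r y : ℝ} (hr : 0 < r) :
    DD 0 (r : ℂ) y = 2 * Complex.I * ((y / (r ^ 2 + y ^ 2) : ℝ) : ℂ) := by
  have n1 := add_ne (a := (r : ℂ)) (y := y) (by simpa using hr) (Or.inl rfl)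
  have n2 := add_ne (a := (r : ℂ)) (y := y) (by simpa using hr) (Or.inr rfl)
  rw [← sub_eq_add_neg] at n2
  have h3 : (r : ℂ) ^ 2 + (y : ℂ) ^ 2 ≠ 0 := by
    have : r ^ 2 + y ^ 2 ≠ 0 := by positivity
    exact_mod_cast this
  have h4 : (r : ℂ) ^ 2 + (y : ℂ) ^ 2 = (r - Complex.I * y) * (r + Complex.I * y) := by
    linear_combination ((y : ℂ) ^ 2) * Complex.I_sq
  unfold DD
  push_cast
  rw [h4]
  field_simp
  ring

lemma real_base_integrable {α : ℝ} (hα : α ∈ Set.Ioo (0 : ℝ) 2) {r : ℝ} (hr : 0 < r) :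
    IntegrableOn (fun y : ℝ => y / (r ^ 2 + y ^ 2) * y ^ (-α)) (Set.Ioi 0) := by
  have := (DD_integrable hα 0 (a := (r : ℂ)) (by simpa using hr)).im.const_mul (1 / 2)
  refine this.congr (Filter.Eventually.of_forall fun y => ?_)
  simp only [DD_zero_real hr]
  have : 2 * Complex.I * ((y / (r ^ 2 + y ^ 2) : ℝ) : ℂ) * ((y ^ (-α) : ℝ) : ℂ)
    = ((2 * (y / (r ^ 2 + y ^ 2) * y ^ (-α)) : ℝ) : ℂ) * Complex.I := by push_cast; ring
  rw [this]
  simp only [RCLike.im_to_complex, Complex.im_ofReal_mul, Complex.I_im]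
  ring

lemma real_base {α : ℝ} (hα : α ∈ Set.Ioo (0 : ℝ) 2) {r : ℝ} (hr : 0 < r) :
    ∫ y in Set.Ioi (0 : ℝ), y / (r ^ 2 + y ^ 2) * y ^ (-α) =
      1 / 2 * Real.Gamma (1 - α / 2) * Real.Gamma (α / 2) * r ^ (-α) := by
  have hα0 := hα.1
  have hα2 := hα.2
  let f : ℝ → ℝ → ℝ := fun y t => y ^ (1 - α) * Real.exp (-(r ^ 2 + y ^ 2) * t)
  have inner : ∀ y ∈ Set.Ioi (0 : ℝ), ∫ t in Set.Ioi (0 : ℝ), f y t = y / (r ^ 2 + y ^ 2) * y ^ (-α) := by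
    intro y hy
    have hy0 : 0 < y := hy
    simp only [f]
    rw [integral_const_mul, integral_exp_mul_Ioi (by nlinarith [sq_nonneg y, pow_pos hr 2]), sub_eq_add_neg,
      Real.rpow_add hy0, Real.rpow_one]
    simp only [mul_zero, Real.exp_zero]
    have : r ^ 2 + y ^ 2 ≠ 0 := by positivity
    rw [neg_div_neg_eq]
    ring
  have hmeas : Measurable (Function.uncurry f) := by
    unfold f Function.uncurry
    fun_prop
  have hnn : ∀ y ∈ Set.Ioi (0 : ℝ), ∀ t, ‖f y t‖ = f y t := by
    intro y hy t
    have hy0 : 0 < y := hy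
    exact Real.norm_of_nonneg (by positivity)
  have hint : Integrable (Function.uncurry f)
      ((volume.restrict (Set.Ioi (0 : ℝ))).prod (volume.restrict (Set.Ioi (0 : ℝ)))) := by
    rw [integrable_prod_iff hmeas.aestronglyMeasurable]
    constructor
    · refine (ae_restrict_iff' measurableSet_Ioi).2 (Filter.Eventually.of_forall fun y hy => ?_)
      simp only [Function.uncurry, f]
      apply Integrable.const_mul
      exact integrableOn_exp_mul_Ioi (by nlinarith [sq_nonneg y, pow_pos hr 2]) 0
    · refine (real_base_integrable hα hr).congr ?_
      refine (ae_restrict_iff' measurableSet_Ioi).2 (Filter.Eventually.of_forall fun y hy => ?_)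
      simp only [Function.uncurry, hnn y hy]
      exact (inner y hy).symm
  rw [← setIntegral_congr_fun measurableSet_Ioi inner, integral_integral_swap hint]
  have inner2 : ∀ t ∈ Set.Ioi (0 : ℝ), ∫ y in Set.Ioi (0 : ℝ), f y t =
      (1 / 2 * Real.Gamma (1 - α / 2)) * (t ^ (α / 2 - 1) * Real.exp (-(r ^ 2 * t))) := by
    intro t ht
    have ht0 : 0 < t := ht
    have e : ∀ y ∈ Set.Ioi (0:ℝ), f y t = Real.exp (-(r ^ 2 * t)) * (y ^ (1 - α) * Real.exp (-t * y ^ (2 : ℝ))) := by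
      intro y hy
      simp only [f]
      rw [Real.rpow_two, mul_left_comm, ← Real.exp_add]
      congr 2
      ring
    rw [setIntegral_congr_fun measurableSet_Ioi e, integral_const_mul,
      integral_rpow_mul_exp_neg_mul_rpow two_pos (by linarith) ht0]
    rw [show -(1 - α + 1) / 2 = α / 2 - 1 by ring, show (1 - α + 1) / 2 = 1 - α / 2 by ring]
    ring
  rw [setIntegral_congr_fun measurableSet_Ioi inner2, integral_const_mul,
    Real.integral_rpow_mul_exp_neg_mul_Ioi (by linarith) (by positivity)]
  have : (1 / r ^ 2) ^ (α / 2) = r ^ (-α) := by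
    rw [one_div, ← Real.rpow_natCast, ← Real.rpow_neg hr.le, ← Real.rpow_mul hr.le]
    congr 1
    push_cast
    ring
  rw [this]
  ring

lemma FF_zero_real {α : ℝ} (hα : α ∈ Set.Ioo (0 : ℝ) 2) {r : ℝ} (hr : 0 < r) :
    FF α 0 (r : ℂ) = Complex.I * ((Real.Gamma (1 - α / 2) * Real.Gamma (α / 2) : ℝ) : ℂ) * (r : ℂ) ^ (-(α : ℂ)) := by
  unfold FF
  have e : ∀ y ∈ Set.Ioi (0 : ℝ), DD 0 (r : ℂ) y * ((y ^ (-α) : ℝ) : ℂ) =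
      2 * Complex.I * ((y / (r ^ 2 + y ^ 2) * y ^ (-α) : ℝ) : ℂ) := by
    intro y hy
    rw [DD_zero_real hr]
    push_cast
    ring
  rw [setIntegral_congr_fun measurableSet_Ioi e, integral_const_mul, integral_complex_ofReal, real_base hα hr]
  rw [show (-(α : ℂ)) = ((-α : ℝ) : ℂ) by push_cast; rfl, ← Complex.ofReal_cpow hr.le]
  push_cast
  ring

lemma halfplane_open : IsOpen {z : ℂ | 0 < z.re} := isOpen_lt continuous_const Complex.continuous_re

lemma FF_zero {α : ℝ} (hα : α ∈ Set.Ioo (0 : ℝ) 2) {a : ℂ} (ha : 0 < a.re) :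
    FF α 0 a = Complex.I * ((Real.Gamma (1 - α / 2) * Real.Gamma (α / 2) : ℝ) : ℂ) * a ^ (-(α : ℂ)) := by
  have h1 : AnalyticOnNhd ℂ (FF α 0) {z : ℂ | 0 < z.re} := by
    apply DifferentiableOn.analyticOnNhd _ halfplane_open
    intro z hz
    exact (FF_deriv hα 0 hz).differentiableAt.differentiableWithinAt
  have h2 : AnalyticOnNhd ℂ (fun a : ℂ => Complex.I * ((Real.Gamma (1 - α / 2) * Real.Gamma (α / 2) : ℝ) : ℂ) * a ^ (-(α : ℂ)))
      {z : ℂ | 0 < z.re} := by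
    apply DifferentiableOn.analyticOnNhd _ halfplane_open
    intro z hz
    apply DifferentiableAt.differentiableWithinAt
    apply DifferentiableAt.const_mul
    exact (differentiableAt_id).cpow_const (Or.inl hz)
  refine AnalyticOnNhd.eqOn_of_preconnected_of_frequently_eq h1 h2
    (convex_halfSpace_re_gt 0).isPreconnected (z₀ := 1) (by simp) ?_ ha
  have hu : Filter.Tendsto (fun n : ℕ => (((1 + 1 / ((n : ℝ) + 1) : ℝ)) : ℂ)) Filter.atTop (nhdsWithin 1 {1}ᶜ) := by
    apply tendsto_nhdsWithin_iff.2
    constructor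
    · have : Filter.Tendsto (fun n : ℕ => (1 + 1 / ((n : ℝ) + 1) : ℝ)) Filter.atTop (nhds (1 + 0)) :=
        tendsto_const_nhds.add tendsto_one_div_add_atTop_nhds_zero_nat
      rw [add_zero] at this
      have h := (Complex.continuous_ofReal.tendsto 1).comp this
      rw [Complex.ofReal_one] at h
      exact h
    · refine Filter.Eventually.of_forall fun n => ?_
      have : (1 + 1 / ((n : ℝ) + 1) : ℝ) ≠ 1 := by
        have : 0 < 1 / ((n : ℝ) + 1) := by positivity
        linarith
      simp only [Set.mem_compl_iff, Set.mem_singleton_iff]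
      exact_mod_cast this
  refine hu.frequently (Filter.Eventually.frequently (Filter.Eventually.of_forall fun n => ?_))
  exact FF_zero_real hα (by positivity)

lemma FF_formula {α : ℝ} (hα : α ∈ Set.Ioo (0 : ℝ) 2) (k : ℕ) {a : ℂ} (ha : 0 < a.re) :
    ((cFrac α / α : ℝ) : ℂ) * FF α k a =
      Complex.I * ((Real.Gamma (k + α) / k.factorial : ℝ) : ℂ) * a ^ (-(k : ℂ) - α) := by
  have hα0 := hα.1
  have hα2 := hα.2
  induction k generalizing a with
  | zero =>
    rw [FF_zero hα ha]
    have hc : cFrac α / α * (Real.Gamma (1 - α / 2) * Real.Gamma (α / 2)) = Real.Gamma α := by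
      have hg : Real.Gamma (1 - α / 2) ≠ 0 := (Real.Gamma_pos_of_pos (by linarith)).ne'
      have hd := Real.Gamma_mul_Gamma_add_half (α / 2)
      rw [show 2 * (α / 2) = α by ring, add_comm (α / 2)] at hd
      have hpi : Real.sqrt Real.pi ≠ 0 := (Real.sqrt_pos.2 Real.pi_pos).ne'
      unfold cFrac
      have h2 : (2 : ℝ) ^ (α - 1) * 2 ^ (1 - α) = 1 := by
        rw [← Real.rpow_add two_pos]; simp
      have : α * 2 ^ (α - 1) * Real.Gamma (1 / 2 + α / 2) / (√Real.pi * Real.Gamma (1 - α / 2)) / α *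
        (Real.Gamma (1 - α / 2) * Real.Gamma (α / 2)) = 2 ^ (α - 1) * (Real.Gamma (α / 2) * Real.Gamma (1 / 2 + α / 2)) / √Real.pi := by
        field_simp
      rw [this, hd, div_eq_iff hpi]
      linear_combination Real.Gamma α * √Real.pi * h2
    simp only [Nat.cast_zero, zero_add, Nat.factorial_zero, Nat.cast_one, div_one, neg_zero, zero_sub]
    rw [← hc]
    push_cast
    ring
  | succ k ih =>
    have hne : a ≠ 0 := by rintro rfl; simp at ha
    have d1 := (FF_deriv hα k ha).const_mul ((cFrac α / α : ℝ) : ℂ)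
    have d2 : HasDerivAt (fun a : ℂ => Complex.I * ((Real.Gamma (k + α) / k.factorial : ℝ) : ℂ) * a ^ (-(k : ℂ) - α))
        (Complex.I * ((Real.Gamma (k + α) / k.factorial : ℝ) : ℂ) * ((-(k : ℂ) - α) * a ^ (-(k : ℂ) - α - 1) * 1)) a :=
      ((hasDerivAt_id a).cpow_const (Or.inl ha)).const_mul _
    have d3 := d1.unique (d2.congr_of_eventuallyEq
      (Filter.eventually_of_mem (halfplane_open.mem_nhds ha) fun z hz => ih hz))
    have hG : Real.Gamma (((k + 1 : ℕ) : ℝ) + α) = (k + α) * Real.Gamma (k + α) := by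
      rw [← Real.Gamma_add_one (by positivity)]
      congr 1
      push_cast
      ring
    have hk : ((k : ℂ) + 1) ≠ 0 := by exact_mod_cast k.succ_ne_zero
    have hf : ((k.factorial : ℕ) : ℂ) ≠ 0 := by exact_mod_cast k.factorial_ne_zero
    rw [hG, Nat.factorial_succ]
    rw [show (-((k + 1 : ℕ) : ℂ) - α) = -(k : ℂ) - α - 1 by push_cast; ring]
    apply mul_left_cancel₀ (neg_ne_zero.2 hk)
    rw [mul_left_comm, d3]
    push_cast
    field_simp
    ring

lemma gbinomR_nat (n k : ℕ) : gbinomR (n : ℝ) k = (n.choose k : ℝ) := by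
  have h : ∀ k : ℕ, (∏ i ∈ Finset.range k, ((n : ℝ) - (i : ℝ))) = (n.descFactorial k : ℝ) := by
    intro k
    induction k with
    | zero => simp
    | succ k ih =>
      rw [Finset.prod_range_succ, ih, Nat.descFactorial_succ]
      rcases le_or_gt k n with hk | hk
      · push_cast [Nat.cast_sub hk]; ring
      · rw [Nat.descFactorial_of_lt hk]; simp
  unfold gbinomR
  rw [h, Nat.descFactorial_eq_factorial_mul_choose]
  have : (k.factorial : ℝ) ≠ 0 := by exact_mod_cast k.factorial_ne_zero
  push_cast
  field_simp

lemma Gamma_gbinom {α : ℝ} (hα : 0 < α) (k : ℕ) :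
    (-1 : ℝ) ^ k * (Real.Gamma (((k + 1 : ℕ) : ℝ) + α) / k.factorial) =
      Real.Gamma (1 + α) * gbinomR (-1 - α) k := by
  induction k with
  | zero => simp [gbinomR]
  | succ k ih =>
    have hk : ((k : ℝ) + 1) ≠ 0 := by positivity
    have hf : (k.factorial : ℝ) ≠ 0 := by exact_mod_cast k.factorial_ne_zero
    have hG : Real.Gamma (((k + 1 + 1 : ℕ) : ℝ) + α) = (((k + 1 : ℕ) : ℝ) + α) * Real.Gamma (((k + 1 : ℕ) : ℝ) + α) := by
      rw [← Real.Gamma_add_one (by positivity)]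
      congr 1
      push_cast
      ring
    have hg : gbinomR (-1 - α) (k + 1) = gbinomR (-1 - α) k * ((-1 - α - k) / (k + 1)) := by
      unfold gbinomR
      rw [Finset.prod_range_succ, Nat.factorial_succ]
      push_cast
      field_simp
    rw [hG, hg, ← mul_assoc, ← ih, Nat.factorial_succ]
    push_cast
    field_simp
    ring

lemma inner_comb (N k : ℕ) (hk : k ≤ N) (s : ℂ) :
    ∑ j ∈ Finset.range (N + 1), ((N + 1).choose (j + 1) : ℂ) * ((j + 1).choose (k + 1) : ℂ) * (s - 1) ^ (N - j)
      = ((N + 1).choose (k + 1) : ℂ) * s ^ (N - k) := by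
  obtain ⟨M, rfl⟩ := Nat.exists_eq_add_of_le hk
  rw [add_assoc k M 1, Finset.sum_range_add, Finset.sum_eq_zero, zero_add]
  · have hs : s ^ (k + M - k) = ∑ i ∈ Finset.range (M + 1), (M.choose i : ℂ) * (s - 1) ^ (M - i) := by
      rw [Nat.add_sub_cancel_left]
      conv_lhs => rw [show s = 1 + (s - 1) by ring, add_pow]
      exact Finset.sum_congr rfl fun i _ => by rw [one_pow]; ring
    rw [hs, Finset.mul_sum]
    refine Finset.sum_congr rfl fun i hi => ?_
    have hi' : i ≤ M := Nat.lt_succ_iff.1 (Finset.mem_range.1 hi)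
    have := Nat.choose_mul (n := k + (M + 1)) (k := k + i + 1) (s := k + 1) (by omega)
    rw [show k + (M + 1) - (k + 1) = M by omega, show k + i + 1 - (k + 1) = i by omega] at this
    rw [show k + M - (k + i) = M - i by omega, ← mul_assoc]
    congr 1
    exact_mod_cast this
  · intro j hj
    have : j < k := Finset.mem_range.1 hj
    rw [Nat.choose_eq_zero_of_lt (show j + 1 < k + 1 by omega)]
    simp

lemma comb (α : ℝ) (N : ℕ) (s : ℂ) :
    ((N : ℂ) + 1) * ∑ j ∈ Finset.range (N + 1), (N.choose j : ℂ) * (s - 1) ^ (N - j) * (GR α j : ℂ) =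
      ∑ k ∈ Finset.range (N + 1), ((N + 1).choose (k + 1) : ℂ) * ((gbinomR (-1 - α) k * 2 ^ k : ℝ) : ℂ) * s ^ (N - k) := by
  have hG : ∀ j ∈ Finset.range (N + 1), ((N : ℂ) + 1) * ((N.choose j : ℂ) * (s - 1) ^ (N - j) * (GR α j : ℂ)) =
      ∑ k ∈ Finset.range (N + 1), ((gbinomR (-1 - α) k * 2 ^ k : ℝ) : ℂ) *
        (((N + 1).choose (j + 1) : ℂ) * ((j + 1).choose (k + 1) : ℂ) * (s - 1) ^ (N - j)) := by
    intro j hj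
    have hj' : j + 1 ≤ N + 1 := Finset.mem_range.1 hj
    have hGR : GR α j = (1 / ((j : ℝ) + 1)) * ∑ k ∈ Finset.range (N + 1),
        ((j + 1).choose (k + 1) : ℝ) * gbinomR (-1 - α) k * 2 ^ k := by
      unfold GR
      congr 1
      rw [← Finset.sum_subset (Finset.range_subset_range.2 hj')]
      · refine Finset.sum_congr rfl fun k _ => ?_
        rw [← gbinomR_nat]
        push_cast
        rfl
      · intro k _ hk
        have : j + 1 ≤ k := by simpa using hk
        rw [Nat.choose_eq_zero_of_lt (show j + 1 < k + 1 by omega)]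
        simp
    have hc : ((N : ℂ) + 1) * (N.choose j : ℂ) = ((N + 1).choose (j + 1) : ℂ) * ((j : ℂ) + 1) := by
      exact_mod_cast Nat.add_one_mul_choose_eq N j
    have hj0 : ((j : ℂ) + 1) ≠ 0 := by exact_mod_cast j.succ_ne_zero
    rw [hGR]
    push_cast
    rw [← mul_assoc, ← mul_assoc, ← mul_assoc, hc]
    rw [Finset.mul_sum]
    refine Finset.sum_congr rfl fun k _ => ?_
    field_simp
  rw [Finset.mul_sum, Finset.sum_congr rfl hG, Finset.sum_comm]
  refine Finset.sum_congr rfl fun k hk => ?_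
  rw [← Finset.mul_sum, inner_comb N k (Nat.lt_succ_iff.1 (Finset.mem_range.1 hk))]
  ring

lemma split_sum (N : ℕ) (h : ℕ → ℂ) :
    ∑ j ∈ Finset.range (N + 1), h j =
      ∑ l ∈ (Finset.range (N + 1)).filter (fun l => 2 * l ≤ N), h (2 * l) +
      ∑ l ∈ (Finset.range (N + 1)).filter (fun l => 2 * l + 1 ≤ N), h (2 * l + 1) := by
  rw [← Finset.sum_filter_add_sum_filter_not (Finset.range (N + 1)) (fun j => j % 2 = 0)]
  congr 1
  · refine Finset.sum_nbij' (fun j => j / 2) (fun l => 2 * l) ?_ ?_ ?_ ?_ ?_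
    · intro j; simp only [Finset.mem_filter, Finset.mem_range]; omega
    · intro j; simp only [Finset.mem_filter, Finset.mem_range]; omega
    · intro j; simp only [Finset.mem_filter, Finset.mem_range]; omega
    · intro j; simp only [Finset.mem_filter, Finset.mem_range]; omega
    · intro j; simp only [Finset.mem_filter, Finset.mem_range]; intro hj; congr 1; omega
  · refine Finset.sum_nbij' (fun j => j / 2) (fun l => 2 * l + 1) ?_ ?_ ?_ ?_ ?_
    · intro j; simp only [Finset.mem_filter, Finset.mem_range]; omega
    · intro j; simp only [Finset.mem_filter, Finset.mem_range]; omega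
    · intro j; simp only [Finset.mem_filter, Finset.mem_range]; omega
    · intro j; simp only [Finset.mem_filter, Finset.mem_range]; omega
    · intro j; simp only [Finset.mem_filter, Finset.mem_range]; intro hj; congr 1; omega

lemma log_one_add (x : ℝ) : Complex.log (1 + Complex.I * x) =
    ((Real.log (1 + x ^ 2) / 2 : ℝ) : ℂ) + (Real.arctan x : ℝ) * Complex.I := by
  have hp : 0 < 1 + x ^ 2 := by positivity
  have hs : 0 < Real.sqrt (1 + x ^ 2) := Real.sqrt_pos.2 hp
  have hs' : (Real.sqrt (1 + x ^ 2) : ℂ) ≠ 0 := by exact_mod_cast hs.ne'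
  have e : 1 + Complex.I * x = (Real.sqrt (1 + x ^ 2) : ℂ) * Complex.exp ((Real.arctan x : ℝ) * Complex.I) := by
    rw [Complex.exp_mul_I, ← Complex.ofReal_cos, ← Complex.ofReal_sin, Real.cos_arctan, Real.sin_arctan]
    push_cast
    field_simp
  rw [e, Complex.log_ofReal_mul hs (Complex.exp_ne_zero _), Complex.log_exp, Real.log_sqrt hp.le]
  · rw [Complex.im_ofReal_mul, Complex.I_im, mul_one]
    linarith [Real.neg_pi_div_two_lt_arctan x, Real.pi_pos]
  · rw [Complex.im_ofReal_mul, Complex.I_im, mul_one]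
    linarith [Real.arctan_lt_pi_div_two x, Real.pi_pos]

lemma cpow_eval (α : ℝ) (n : ℕ) (x : ℝ) :
    (1 + Complex.I * x) ^ (-(n : ℂ) - α) =
      (((1 + x ^ 2) ^ (((n : ℝ) + α) / 2) : ℝ) : ℂ)⁻¹ * (-Complex.I) ^ n *
        Complex.exp (((((n : ℝ) + α) * arccot x - Real.pi * α / 2 : ℝ) : ℂ) * Complex.I) := by
  have hp : 0 < 1 + x ^ 2 := by positivity
  have hne : 1 + Complex.I * x ≠ 0 := by
    intro h
    have := congrArg Complex.re h
    simp at this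
  have hI : (-Complex.I) = Complex.exp (-(Real.pi / 2 * Complex.I)) := by
    rw [Complex.exp_neg, Complex.exp_pi_div_two_mul_I, Complex.inv_I]
  rw [Complex.cpow_def_of_ne_zero hne, log_one_add, Real.rpow_def_of_pos hp, Complex.ofReal_exp, ← Complex.exp_neg, hI, ← Complex.exp_nat_mul,
    ← Complex.exp_add, ← Complex.exp_add]
  congr 1
  unfold arccot
  push_cast
  ring

lemma higgins_deriv (n : ℕ) (u : ℝ) :
    HasDerivAt (higgins (n : ℤ)) (∑ k ∈ Finset.range n, ((n.choose (k + 1) : ℂ) * (-2) ^ (k + 1) *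
      (-((k : ℂ) + 1) * Complex.I)) * ((1 + Complex.I * u)⁻¹) ^ (k + 2)) u := by
  have hne : ∀ v : ℝ, 1 + Complex.I * (v : ℂ) ≠ 0 := by
    intro v h
    have := congrArg Complex.re h
    simp at this
  have hf : higgins (n : ℤ) = fun v : ℝ => ∑ k ∈ Finset.range n, ((n.choose (k + 1) : ℂ) * (-2) ^ (k + 1)) *
      ((1 + Complex.I * v)⁻¹) ^ (k + 1) + 1 := by
    funext v
    unfold higgins
    have e : (Complex.I * (v : ℂ) - 1) / (Complex.I * (v : ℂ) + 1) = (-2) * (1 + Complex.I * v)⁻¹ + 1 := by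
      have := hne v
      rw [add_comm (Complex.I * (v : ℂ)) 1]
      field_simp
      ring
    rw [e, zpow_natCast, add_pow, Finset.sum_range_succ']
    simp only [one_pow, mul_one, pow_zero, Nat.choose_zero_right, Nat.cast_one]
    congr 1
    refine Finset.sum_congr rfl fun k _ => ?_
    rw [mul_pow]
    ring
  rw [hf]
  refine HasDerivAt.add_const _ (HasDerivAt.fun_sum fun k _ => ?_)
  have d0 : HasDerivAt (fun v : ℝ => 1 + Complex.I * (v : ℂ)) Complex.I u := by
    have := ((Complex.ofRealCLM.hasDerivAt (x := u)).const_mul Complex.I).const_add 1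
    simpa using this
  have d1 := ((d0.fun_inv (hne u)).fun_pow (k + 1)).const_mul ((n.choose (k + 1) : ℂ) * (-2) ^ (k + 1))
  refine d1.congr_deriv ?_
  push_cast
  simp only [Nat.add_sub_cancel, div_eq_mul_inv, ← inv_pow]
  ring

lemma CH'_eq (n : ℕ) (u : ℝ) : CH' n u = (∑ k ∈ Finset.range n, ((n.choose (k + 1) : ℂ) * (-2) ^ (k + 1) *
      (-((k : ℂ) + 1) * Complex.I)) * ((1 + Complex.I * u)⁻¹) ^ (k + 2)).re := by
  have h := higgins_deriv n u
  have := (Complex.reCLM.hasFDerivAt (x := higgins n u)).comp_hasDerivAt u h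
  exact this.deriv

lemma CH'_diff (n : ℕ) (x y : ℝ) : CH' n (x - y) - CH' n (x + y) =
    (∑ k ∈ Finset.range n, ((n.choose (k + 1) : ℂ) * (-2) ^ (k + 1) *
      (-((k : ℂ) + 1) * Complex.I)) * DD (k + 1) (1 + Complex.I * x) y).re := by
  rw [CH'_eq, CH'_eq, ← Complex.sub_re, ← Finset.sum_sub_distrib]
  congr 1
  refine Finset.sum_congr rfl fun k _ => ?_
  unfold DD
  rw [← mul_sub]
  push_cast
  rw [show 1 + Complex.I * ((x : ℂ) - y) = 1 + Complex.I * x - Complex.I * y by ring,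
    show 1 + Complex.I * ((x : ℂ) + y) = 1 + Complex.I * x + Complex.I * y by ring]

lemma main_complex {α : ℝ} (hα : α ∈ Set.Ioo (0 : ℝ) 2) (n : ℕ) (x : ℝ) :
    IntegrableOn (fun y : ℝ => (CH' n (x - y) - CH' n (x + y)) * y ^ (-α)) (Set.Ioi 0) ∧
    (cFrac α / α) * ∫ y in Set.Ioi (0 : ℝ), (CH' n (x - y) - CH' n (x + y)) * y ^ (-α) =
      (∑ k ∈ Finset.range n, (n.choose (k + 1) : ℂ) * (-2) ^ (k + 1) *
        ((Real.Gamma (((k + 1 : ℕ) : ℝ) + α) / k.factorial : ℝ) : ℂ) *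
          (1 + Complex.I * x) ^ (-((k + 1 : ℕ) : ℂ) - α)).re := by
  have ha : 0 < (1 + Complex.I * (x : ℂ)).re := by simp
  have hterm : ∀ k ∈ Finset.range n, Integrable (fun y : ℝ => ((n.choose (k + 1) : ℂ) * (-2) ^ (k + 1) *
      (-((k : ℂ) + 1) * Complex.I)) * (DD (k + 1) (1 + Complex.I * x) y * ((y ^ (-α) : ℝ) : ℂ)))
      (volume.restrict (Set.Ioi (0 : ℝ))) := fun k _ =>
    (DD_integrable hα (k + 1) ha).const_mul _
  have hsum := integrable_finsetSum _ hterm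
  have heq : ∀ y : ℝ, (CH' n (x - y) - CH' n (x + y)) * y ^ (-α) =
      (∑ k ∈ Finset.range n, ((n.choose (k + 1) : ℂ) * (-2) ^ (k + 1) *
      (-((k : ℂ) + 1) * Complex.I)) * (DD (k + 1) (1 + Complex.I * x) y * ((y ^ (-α) : ℝ) : ℂ))).re := by
    intro y
    rw [CH'_diff, ← Complex.re_mul_ofReal, Finset.sum_mul]
    simp only [mul_assoc]
  simp only [heq]
  refine ⟨hsum.re, ?_⟩
  have h1 := integral_re hsum
  simp only [RCLike.re_to_complex] at h1
  rw [h1, ← Complex.re_ofReal_mul, integral_finsetSum _ hterm, Finset.mul_sum]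
  congr 1
  refine Finset.sum_congr rfl fun k _ => ?_
  rw [integral_const_mul, mul_left_comm]
  have := FF_formula hα (k + 1) ha
  unfold FF at this
  rw [this, Nat.factorial_succ]
  have hk : ((k : ℂ) + 1) ≠ 0 := by exact_mod_cast k.succ_ne_zero
  have hf : ((k.factorial : ℕ) : ℂ) ≠ 0 := by exact_mod_cast k.factorial_ne_zero
  push_cast
  field_simp
  rw [Complex.I_sq]
  ring

lemma sum_eval {α : ℝ} (hα : 0 < α) (N : ℕ) (x : ℝ) :
    (∑ k ∈ Finset.range (N + 1), ((N + 1).choose (k + 1) : ℂ) * (-2) ^ (k + 1) *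
        ((Real.Gamma (((k + 1 : ℕ) : ℝ) + α) / k.factorial : ℝ) : ℂ) *
          (1 + Complex.I * x) ^ (-((k + 1 : ℕ) : ℂ) - α)) =
      ((2 * ((N + 1 : ℕ) : ℝ) * Real.Gamma (1 + α) / (1 + x ^ 2) ^ ((((N + 1 : ℕ) : ℝ) + α) / 2) : ℝ) : ℂ) *
      (Complex.I * Complex.exp ((((((N + 1 : ℕ) : ℝ) + α) * arccot x - Real.pi * α / 2 : ℝ) : ℂ) * Complex.I)) *
      ∑ j ∈ Finset.range (N + 1), (-Complex.I) ^ j * ((N.choose j * x ^ (N - j) * GR α j : ℝ) : ℂ) := by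
  have hne : 1 + Complex.I * (x : ℂ) ≠ 0 := by
    intro h
    have := congrArg Complex.re h
    simp at this
  have h1 : ∀ k ∈ Finset.range (N + 1), ((N + 1).choose (k + 1) : ℂ) * (-2) ^ (k + 1) *
        ((Real.Gamma (((k + 1 : ℕ) : ℝ) + α) / k.factorial : ℝ) : ℂ) *
          (1 + Complex.I * x) ^ (-((k + 1 : ℕ) : ℂ) - α) =
      (-2 * (Real.Gamma (1 + α) : ℂ) * (1 + Complex.I * x) ^ (-((N + 1 : ℕ) : ℂ) - α)) *
      (((N + 1).choose (k + 1) : ℂ) * ((gbinomR (-1 - α) k * 2 ^ k : ℝ) : ℂ) * (1 + Complex.I * x) ^ (N - k)) := by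
    intro k hk
    have hk' : k ≤ N := Nat.lt_succ_iff.1 (Finset.mem_range.1 hk)
    have hp : (1 + Complex.I * (x : ℂ)) ^ (-((k + 1 : ℕ) : ℂ) - α) =
        (1 + Complex.I * x) ^ (-((N + 1 : ℕ) : ℂ) - α) * (1 + Complex.I * x) ^ (N - k) := by
      rw [← Complex.cpow_natCast, ← Complex.cpow_add _ _ hne]
      congr 1
      push_cast [Nat.cast_sub hk']
      ring
    have hg := congrArg (fun t : ℝ => (t : ℂ)) (Gamma_gbinom hα k)
    simp only [Complex.ofReal_mul] at hg
    rw [hp]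
    have h2 : (-2 : ℂ) ^ (k + 1) = -2 * 2 ^ k * (((-1 : ℝ) ^ k : ℝ) : ℂ) := by
      push_cast
      rw [pow_succ, show (-2 : ℂ) = 2 * (-1) by ring, mul_pow]
      ring
    rw [h2, Complex.ofReal_mul]
    push_cast at hg ⊢
    linear_combination (-2 * ((N + 1).choose (k + 1) : ℂ) * 2 ^ k * (1 + Complex.I * (x : ℂ)) ^ (-((N + 1 : ℂ)) - α) * (1 + Complex.I * x) ^ (N - k)) * hg
  rw [Finset.sum_congr rfl h1, ← Finset.mul_sum, ← comb, cpow_eval]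
  simp only [add_sub_cancel_left]
  have h3 : (-Complex.I) ^ (N + 1) * ∑ j ∈ Finset.range (N + 1), (N.choose j : ℂ) * (Complex.I * x) ^ (N - j) * (GR α j : ℂ)
      = -Complex.I * ∑ j ∈ Finset.range (N + 1), (-Complex.I) ^ j * ((N.choose j * x ^ (N - j) * GR α j : ℝ) : ℂ) := by
    rw [pow_succ', mul_assoc, Finset.mul_sum]
    congr 1
    refine Finset.sum_congr rfl fun j hj => ?_
    have hj' : j ≤ N := Nat.lt_succ_iff.1 (Finset.mem_range.1 hj)
    have : (-Complex.I) ^ N = (-Complex.I) ^ j * (-Complex.I) ^ (N - j) := by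
      rw [← pow_add]; congr 1; omega
    have h5 : (-Complex.I) ^ (N - j) * Complex.I ^ (N - j) = 1 := by
      rw [← mul_pow]; simp
    rw [this, mul_pow]
    push_cast
    linear_combination ((-Complex.I) ^ j * (N.choose j : ℂ) * (x : ℂ) ^ (N - j) * (GR α j : ℂ)) * h5
  generalize Complex.exp _ = E at *
  generalize (1 + x ^ 2) ^ ((((N + 1 : ℕ) : ℝ) + α) / 2) = R at *
  simp only [Complex.ofReal_div, Complex.ofReal_mul, div_eq_mul_inv, Complex.ofReal_natCast, Complex.ofReal_ofNat] at h3 ⊢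
  push_cast at h3 ⊢
  linear_combination (-2 * (Real.Gamma (1 + α) : ℂ) * (R : ℂ)⁻¹ * E * ((N : ℂ) + 1)) * h3

theorem fracLap_CH (α : ℝ) (hα : α ∈ Set.Ioo (0 : ℝ) 2) (n : ℕ) (hn : 1 ≤ n) (x : ℝ) :
    IntegrableOn (fun y : ℝ => (CH' n (x - y) - CH' n (x + y)) * y ^ (-α)) (Set.Ioi 0) ∧
    (cFrac α / α) * ∫ y in Set.Ioi (0 : ℝ), (CH' n (x - y) - CH' n (x + y)) * y ^ (-α) =
      -(2 * (n : ℝ) * Real.Gamma (1 + α) / (1 + x ^ 2) ^ (((n : ℝ) + α) / 2)) *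
          Real.sin (((n : ℝ) + α) * arccot x - Real.pi * α / 2) *
          ∑ l ∈ (Finset.range n).filter (fun l => 2 * l ≤ n - 1),
            (-1 : ℝ) ^ l * gbinomR ((n : ℝ) - 1) (2 * l) * x ^ (n - 1 - 2 * l) * GR α (2 * l)
        + (2 * (n : ℝ) * Real.Gamma (1 + α) / (1 + x ^ 2) ^ (((n : ℝ) + α) / 2)) *
          Real.cos (((n : ℝ) + α) * arccot x - Real.pi * α / 2) *
          ∑ l ∈ (Finset.range n).filter (fun l => 2 * l + 1 ≤ n - 1),
            (-1 : ℝ) ^ l * gbinomR ((n : ℝ) - 1) (2 * l + 1) * x ^ (n - 2 - 2 * l) *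
              GR α (2 * l + 1) := by
  obtain ⟨N, rfl⟩ : ∃ N, n = N + 1 := ⟨n - 1, by omega⟩
  obtain ⟨h1, h2⟩ := main_complex hα (N + 1) x
  refine ⟨h1, ?_⟩
  rw [h2, sum_eval hα.1, split_sum]
  have hc : ((N + 1 : ℕ) : ℝ) - 1 = (N : ℝ) := by push_cast; ring
  simp only [hc, gbinomR_nat, Nat.add_sub_cancel]
  generalize hK : 2 * ((N + 1 : ℕ) : ℝ) * Real.Gamma (1 + α) / (1 + x ^ 2) ^ ((((N + 1 : ℕ) : ℝ) + α) / 2) = K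
  generalize hφ : (((N + 1 : ℕ) : ℝ) + α) * arccot x - Real.pi * α / 2 = φ
  have hA : ∑ l ∈ (Finset.range (N + 1)).filter (fun l => 2 * l ≤ N),
      (-Complex.I) ^ (2 * l) * ((N.choose (2 * l) * x ^ (N - 2 * l) * GR α (2 * l) : ℝ) : ℂ) =
      ((∑ l ∈ (Finset.range (N + 1)).filter (fun l => 2 * l ≤ N),
        (-1 : ℝ) ^ l * (N.choose (2 * l) : ℝ) * x ^ (N - 2 * l) * GR α (2 * l) : ℝ) : ℂ) := by
    rw [Complex.ofReal_sum]
    refine Finset.sum_congr rfl fun l _ => ?_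
    rw [pow_mul, neg_sq, Complex.I_sq]
    push_cast
    ring
  have hB : ∑ l ∈ (Finset.range (N + 1)).filter (fun l => 2 * l + 1 ≤ N),
      (-Complex.I) ^ (2 * l + 1) * ((N.choose (2 * l + 1) * x ^ (N - (2 * l + 1)) * GR α (2 * l + 1) : ℝ) : ℂ) =
      -Complex.I * ((∑ l ∈ (Finset.range (N + 1)).filter (fun l => 2 * l + 1 ≤ N),
        (-1 : ℝ) ^ l * (N.choose (2 * l + 1) : ℝ) * x ^ (N + 1 - 2 - 2 * l) * GR α (2 * l + 1) : ℝ) : ℂ) := by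
    rw [Complex.ofReal_sum, Finset.mul_sum]
    refine Finset.sum_congr rfl fun l _ => ?_
    rw [pow_succ, pow_mul, neg_sq, Complex.I_sq, show N + 1 - 2 - 2 * l = N - (2 * l + 1) by omega]
    push_cast
    ring
  rw [hA, hB, Complex.exp_mul_I, ← Complex.ofReal_cos, ← Complex.ofReal_sin]
  generalize (∑ l ∈ (Finset.range (N + 1)).filter (fun l => 2 * l ≤ N),
        (-1 : ℝ) ^ l * (N.choose (2 * l) : ℝ) * x ^ (N - 2 * l) * GR α (2 * l)) = A
  generalize (∑ l ∈ (Finset.range (N + 1)).filter (fun l => 2 * l + 1 ≤ N),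
        (-1 : ℝ) ^ l * (N.choose (2 * l + 1) : ℝ) * x ^ (N + 1 - 2 - 2 * l) * GR α (2 * l + 1)) = B
  simp only [Complex.mul_re, Complex.mul_im, Complex.add_re, Complex.add_im, Complex.ofReal_re, Complex.ofReal_im,
    Complex.I_re, Complex.I_im, Complex.neg_re, Complex.neg_im]
  ring
end
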